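/- arXiv:2103.14316 — 2 statements merged into one kernel-verified Lean document; each statement's English description precedes it below -/
import Mathlib

section
/- Let p₁, …, pₙ be primes greater than 5 and q_i = p_i^{f_i} prime powers such that for each i, |π(q_i − 1) \ {2,3}| = |π(q_i + 1) \ {2,3}| = 1, and for distinct r, s the sets ({p_r} ∪ π(q_r² − 1)) and ({p_s} ∪ π(q_s² − 1)) intersect exactly in {2,3}. Then for G = PSL(2,q₁) × ⋯ × PSL(2,qₙ), one has |ρ(G)| = 3n + 2 and σ(G) = n + 2; in particular |ρ(G)| = 3σ(G) − 4. -/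
/-- The set of degrees of the irreducible complex characters of `G`. -/
noncomputable def charDegrees (G : Type) [Group G] : Set ℕ :=
  {n | ∃ V : FDRep ℂ G, CategoryTheory.Simple V ∧ n = Module.finrank ℂ V}

/-- `ρ(G)`: the set of primes dividing some irreducible character degree of `G`. -/
noncomputable def rhoSet (G : Type) [Group G] : Set ℕ :=
  {p | p.Prime ∧ ∃ n ∈ charDegrees G, p ∣ n}

/-- `σ(G)`: the maximal number of distinct primes dividing an irreducible
character degree of `G`. -/
noncomputable def sigmaVal (G : Type) [Group G] : ℕ :=
  sSup {k | ∃ n ∈ charDegrees G, k = n.primeFactors.card}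

/-!
The degrees of `PSL(2, q)` are found from representations `V` of `SL(2, q)` on which `-1` acts
trivially. Decompose `V` under the unipotent subgroup `U`. The multiplicity of a character of `U`
depends only on its orbit under the torus, so `dim V` is determined by the three multiplicities at
the trivial character and at the two classes of nontrivial characters. For irreducible `V` the
latter two are at most `1` by Gelfand's trick. If `V` has a `U`-fixed vector, the Bruhat
decomposition bounds the first by `2`, with all nontrivial characters occurring once when it is `2`.
Hence `dim V` is one of `1`, `(q ± 1) / 2`, `q ± 1` and `q`. The degrees `q + 1`, `q` and `q - 1`
are realised inside the even functions on `SL(2, q)` transforming under `U` on the left by a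
character, the last one as a cuspidal constituent of the Gelfand-Graev representation.

The degrees of a direct product are the products of degrees of the factors. Outside `{2, 3}` every
degree of `PSL(2, q_i)` has at most one prime factor, and one of `q_i ± 1` is divisible by `6`; the
sets of primes of the different factors are disjoint outside `{2, 3}`, so both counts are additive
over the factors apart from the two common primes.
-/

open Module Representation
open scoped Pointwise TensorProduct MatrixGroups

section Irreducible

variable {k G H U V W : Type*} [Field k] [Monoid G] [Monoid H] [AddCommGroup V] [Module k V]
  [AddCommGroup W] [Module k W]

theorem nontrivial_of_isIrreducible (ρ : Representation k G V) [ρ.IsIrreducible] :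
    Nontrivial V :=
  IsSimpleModule.nontrivial (MonoidAlgebra k G) ρ.asModule

theorem isIrreducible_of_forall_eq_top [Nontrivial V] (ρ : Representation k G V)
    (h : ∀ (X : Subrepresentation ρ), ∀ x ∈ X, x ≠ 0 → X = ⊤) : ρ.IsIrreducible where
  exists_pair_ne := ⟨⊥, ⊤, fun e ↦
    bot_ne_top (α := Submodule k V) (congrArg Subrepresentation.toSubmodule e)⟩
  eq_bot_or_eq_top X := by
    refine or_iff_not_imp_left.2 fun hX ↦ ?_
    obtain ⟨x, hx, hx0⟩ := X.toSubmodule.exists_mem_ne_zero_of_ne_bot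
      fun e ↦ hX (Subrepresentation.toSubmodule_injective e)
    exact h X x hx hx0

theorem eq_top_of_mem_of_ne_zero {ρ : Representation k G V} [ρ.IsIrreducible]
    {X : Subrepresentation ρ} {x : V} (hx : x ∈ X) (hx0 : x ≠ 0) : X = ⊤ := by
  refine (eq_bot_or_eq_top X).resolve_left ?_
  rintro rfl
  exact hx0 hx

/-- The subrepresentation generated by a set of vectors. -/
def orbitSpan (ρ : Representation k G V) (s : Set V) : Subrepresentation ρ where
  toSubmodule := Submodule.span k {v | ∃ g, ∃ x ∈ s, ρ g x = v}
  apply_mem_toSubmodule g v hv := by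
    have hle : Submodule.span k {v | ∃ g, ∃ x ∈ s, ρ g x = v} ≤
        (Submodule.span k {v | ∃ g, ∃ x ∈ s, ρ g x = v}).comap (ρ g) := by
      rw [Submodule.span_le]
      rintro _ ⟨h, x, hx, rfl⟩
      exact Submodule.subset_span ⟨g * h, x, hx, by simp⟩
    exact hle hv

theorem subset_orbitSpan (ρ : Representation k G V) (s : Set V) : s ⊆ orbitSpan ρ s :=
  fun x hx ↦ Submodule.subset_span ⟨1, x, hx, by simp⟩

theorem span_range_apply_eq_top {ρ : Representation k G V} [ρ.IsIrreducible] {v : V}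
    (hv : v ≠ 0) : Submodule.span k (Set.range fun g ↦ ρ g v) = ⊤ := by
  have h := eq_top_of_mem_of_ne_zero (subset_orbitSpan ρ {v} rfl) hv
  simpa [orbitSpan, Set.range] using! congrArg Subrepresentation.toSubmodule h

theorem isIrreducible_comp_iff {f : H →* G} (hf : Function.Surjective f)
    (ρ : Representation k G V) :
    IsIrreducible (ρ.comp f : Representation k H V) ↔ ρ.IsIrreducible := by
  let e : Subrepresentation (ρ.comp f : Representation k H V) ≃o Subrepresentation ρ :=
    { toFun := fun X ↦ ⟨X.toSubmodule, hf.forall.2 X.apply_mem_toSubmodule⟩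
      invFun := fun X ↦ ⟨X.toSubmodule, fun h ↦ X.apply_mem_toSubmodule (f h)⟩
      left_inv := fun _ ↦ rfl
      right_inv := fun _ ↦ rfl
      map_rel_iff' := Iff.rfl }
  exact e.isSimpleOrder_iff

theorem isIrreducible_toRepresentation {ρ : Representation k G V} {X : Subrepresentation ρ}
    {x : V} (hx : x ∈ X) (hx0 : x ≠ 0)
    (hX : ∀ Y ≤ X, ∀ y ∈ Y, y ≠ 0 → Y = X) : X.toRepresentation.IsIrreducible := by
  have : Nontrivial X.toSubmodule := ⟨⟨x, hx⟩, 0, fun e ↦ hx0 (congrArg Subtype.val e)⟩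
  refine isIrreducible_of_forall_eq_top _ fun Y y hy hy0 ↦ ?_
  let Z : Subrepresentation ρ :=
    { toSubmodule := Y.toSubmodule.map X.toSubmodule.subtype
      apply_mem_toSubmodule := by
        rintro g _ ⟨z, hz, rfl⟩
        exact ⟨_, Y.apply_mem_toSubmodule g hz, rfl⟩ }
  have hZX : Z = X := hX Z (Submodule.map_subtype_le _ _) y ⟨y, hy, rfl⟩ (by simpa using hy0)
  refine Subrepresentation.toSubmodule_injective (eq_top_iff.2 fun z _ ↦ ?_)
  have hz : (z : V) ∈ Z := hZX.symm ▸ z.2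
  obtain ⟨z', hz', e⟩ := hz
  exact Subtype.ext e ▸ hz'

theorem exists_isIrreducible_le_of_apply_ne_zero [FiniteDimensional k V]
    {ρ : Representation k G V} [ρ.IsSemisimpleRepresentation] (a : V →ₗ[k] W)
    {N : Subrepresentation ρ} (hN : ∃ v ∈ N, a v ≠ 0) :
    ∃ X ≤ N, X.toRepresentation.IsIrreducible ∧ ∃ v ∈ X, a v ≠ 0 := by
  -- A subrepresentation minimal among those not killed by `a` is irreducible, since `a` cannot
  -- kill both a proper subrepresentation and its complement.
  obtain ⟨X, hX, hmin⟩ := (InvImage.wf Subrepresentation.toSubmodule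
    (wellFounded_lt (α := Submodule k V))).has_min {X | X ≤ N ∧ ∃ v ∈ X, a v ≠ 0} ⟨N, le_rfl, hN⟩
  obtain ⟨hXN, v, hvX, hav⟩ := hX
  have hkill : ∀ Y < X, ∀ y ∈ Y, a y = 0 := fun Y hY y hy ↦
    of_not_not fun hay ↦ hmin Y ⟨hY.le.trans hXN, y, hy, hay⟩ hY
  refine ⟨X, hXN, isIrreducible_toRepresentation hvX (by rintro rfl; simp at hav) ?_,
    v, hvX, hav⟩
  intro Y hYX y hy hy0
  by_contra hne
  obtain ⟨C, hC⟩ := exists_isCompl Y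
  have hCX : C ⊓ X < X := by
    refine lt_of_le_of_ne inf_le_right fun e ↦ hy0 ?_
    exact (hC.inf_eq_bot ▸ le_inf le_rfl (hYX.trans (inf_eq_right.1 e)) : Y ≤ ⊥) hy
  obtain ⟨y', hy', c, hc, rfl⟩ :=
    Submodule.mem_sup.1 (hC.sup_eq_top ▸ (trivial : v ∈ (⊤ : Submodule k V)) :
      v ∈ (Y ⊔ C).toSubmodule)
  have hcX : c ∈ X := by
    simpa using! X.toSubmodule.sub_mem hvX (hYX hy')
  rw [map_add, hkill Y (lt_of_le_of_ne hYX hne) y' hy', hkill _ hCX c ⟨hc, hcX⟩, add_zero] at hav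
  exact hav rfl

end Irreducible

section Burnside

variable {k G H V W : Type*} [Field k] [Monoid G] [Monoid H] [AddCommGroup V] [Module k V]
  [AddCommGroup W] [Module k W]

theorem isIrreducible_of_span_range_eq_top [Nontrivial V] {ρ : Representation k G V}
    (h : Submodule.span k (Set.range ρ) = ⊤) : ρ.IsIrreducible := by
  refine isIrreducible_of_forall_eq_top ρ fun X x hx hx0 ↦
    Subrepresentation.toSubmodule_injective (eq_top_iff.2 fun y _ ↦ ?_)
  obtain ⟨φ, hφ⟩ := Module.Projective.exists_dual_eq_one k hx0
  have hle : Submodule.span k (Set.range ρ) ≤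
      X.toSubmodule.comap (LinearMap.applyₗ x) := by
    rw [Submodule.span_le]
    rintro _ ⟨g, rfl⟩
    exact X.apply_mem_toSubmodule g hx
  simpa [hφ] using hle (h ▸ Submodule.mem_top : φ.smulRight y ∈ _)

variable [FiniteDimensional k V] [FiniteDimensional k W]

theorem span_range_eq_top [IsAlgClosed k] (ρ : Representation k G V) [ρ.IsIrreducible] :
    Submodule.span k (Set.range ρ) = ⊤ := by
  refine eq_top_iff.2 fun f _ ↦ ?_
  classical
  have hscalar := IsSimpleModule.algebraMap_end_bijective_of_isAlgClosed
    (A := MonoidAlgebra k G) (V := ρ.asModule) k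
  let f' : End (End (MonoidAlgebra k G) ρ.asModule) ρ.asModule :=
    { toFun := f
      map_add' := f.map_add
      map_smul' := fun φ v ↦ by
        obtain ⟨c, rfl⟩ := hscalar.2 φ
        exact f.map_smul c v }
  obtain ⟨r, hr⟩ := jacobson_density f' (Finset.univ.image (Module.finBasis k V))
  have hf : f = ρ.asAlgebraHom r := (Module.finBasis k V).ext fun i ↦
    hr _ (Finset.mem_image_of_mem _ (Finset.mem_univ i))
  rw [hf, asAlgebraHom_def, MonoidAlgebra.lift_apply]
  exact Submodule.sum_mem _ fun g _ ↦ Submodule.smul_mem _ _ (Submodule.subset_span ⟨g, rfl⟩)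

theorem isIrreducible_tprod_fst_snd [IsAlgClosed k] (ρ : Representation k G V)
    (σ : Representation k H W) [ρ.IsIrreducible] [σ.IsIrreducible] :
    (tprod (ρ.comp (MonoidHom.fst G H)) (σ.comp (MonoidHom.snd G H))).IsIrreducible := by
  have := nontrivial_of_isIrreducible ρ
  have := nontrivial_of_isIrreducible σ
  refine isIrreducible_of_span_range_eq_top ?_
  have hrange : Set.range (tprod (ρ.comp (MonoidHom.fst G H)) (σ.comp (MonoidHom.snd G H))) =
      Set.image2 (TensorProduct.mapBilinear (RingHom.id k) V W V W · ·)
        (Set.range ρ) (Set.range σ) := by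
    ext
    simp [Set.mem_image2]
  rw [hrange, ← Submodule.map₂_span_span, span_range_eq_top, span_range_eq_top]
  refine eq_top_iff.2 fun f _ ↦ ?_
  obtain ⟨z, rfl⟩ := (homTensorHomEquiv k V W V W).surjective f
  induction z with
  | zero => simp
  | tmul x y =>
    rw [homTensorHomEquiv_apply, TensorProduct.homTensorHomMap_apply]
    exact Submodule.apply_mem_map₂ _ Submodule.mem_top Submodule.mem_top
  | add x y hx hy => simpa using add_mem (hx trivial) (hy trivial)

end Burnside

section EquivariantMaps

variable {k G H B V : Type*} [Field k] [Group G] [Monoid H] [AddCommGroup B] [Module k B]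
  [AddCommGroup V] [Module k V]

/-- For a representation `σ` of `H` on `B` and `ρ` of `G × H` on `V`, the `H`-equivariant maps
`B → V`, on which `G` acts by post-composition. The trivial action of `G` on `B` makes this a
subrepresentation of `linHom`. -/
def equivariantMaps (σ : Representation k H B) (ρ : Representation k (G × H) V) :
    Subrepresentation (linHom (trivial k G B) (ρ.comp (MonoidHom.inl G H))) where
  toSubmodule :=
    { carrier := {m | ∀ h b, m (σ h b) = ρ (1, h) (m b)}
      add_mem' := fun hf hg h b ↦ by simp [hf h b, hg h b]
      zero_mem' := fun h b ↦ by simp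
      smul_mem' := fun c f hf h b ↦ by simp [hf h b] }
  apply_mem_toSubmodule g m hm h b := by
    have hcomm : ρ (g, 1) * ρ (1, h) = ρ (1, h) * ρ (g, 1) := by simp [← map_mul]
    simpa [hm h b] using LinearMap.congr_fun hcomm (m b)

/-- The `G × H`-equivariant evaluation map `A ⊗ B → V`, for a `G`-stable space `A` of
`H`-equivariant maps `B → V`; it splits an irreducible `V` as an external tensor product. -/
def equivariantMapsEval {σ : Representation k H B} {ρ : Representation k (G × H) V}
    {A : Subrepresentation (linHom (trivial k G B) (ρ.comp (MonoidHom.inl G H)))}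
    (hA : A ≤ equivariantMaps σ ρ) :
    IntertwiningMap (tprod (A.toRepresentation.comp (MonoidHom.fst G H))
      (σ.comp (MonoidHom.snd G H))) ρ where
  toLinearMap := TensorProduct.lift A.toSubmodule.subtype
  isIntertwining' := by
    rintro ⟨g, h⟩
    refine TensorProduct.ext' fun a x ↦ ?_
    have hmul : ρ (g, h) = ρ (g, 1) * ρ (1, h) := by simp [← map_mul]
    calc ρ (g, 1) ((a : B →ₗ[k] V) (trivial k G B g⁻¹ (σ h x)))
        = ρ (g, 1) (ρ (1, h) ((a : B →ₗ[k] V) x)) := congrArg _ (hA a.2 h x)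
      _ = ρ (g, h) ((a : B →ₗ[k] V) x) := by rw [hmul, Module.End.mul_apply]

end EquivariantMaps

section CharDegrees

variable {G H V : Type} [Group G] [Group H]

open CategoryTheory in
theorem isIrreducible_of_simple (V : FDRep ℂ G) [Simple V] :
    IsIrreducible (V.ρ : Representation ℂ G V) := by
  have : Nontrivial V := by
    by_contra h
    rw [not_nontrivial_iff_subsingleton] at h
    refine Simple.not_isZero V ((Limits.IsZero.iff_id_eq_zero V).2 ?_)
    ext x
    exact Subsingleton.elim (α := V) _ _
  refine isIrreducible_of_forall_eq_top _ fun X x hx hx0 ↦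
    Subrepresentation.toSubmodule_injective (eq_top_iff.2 fun y _ ↦ ?_)
  let i : FDRep.of X.toRepresentation ⟶ V :=
    ⟨FGModuleCat.ofHom X.toSubmodule.subtype, fun g ↦ by ext; rfl⟩
  have : Mono i := ⟨fun f g hfg ↦ by
    ext z
    exact congrArg (fun h ↦ h.hom z) hfg⟩
  have hi : i ≠ 0 := fun h0 ↦ hx0 (congrArg (fun h ↦ h.hom (⟨x, hx⟩ : X.toSubmodule)) h0)
  have : IsIso i := isIso_of_mono_of_nonzero hi
  have hy : (inv i ≫ i).hom y = y := by simp
  exact hy ▸ ((inv i).hom y : X.toSubmodule).2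

theorem simple_of_isIrreducible [Finite G] [AddCommGroup V] [Module ℂ V] [FiniteDimensional ℂ V]
    (ρ : Representation ℂ G V) [ρ.IsIrreducible] : CategoryTheory.Simple (FDRep.of ρ) := by
  have := Fintype.ofFinite G
  have := invertibleOfNonzero (NeZero.ne (Nat.card G : ℂ))
  have h := char_orthonormal ρ ρ
  rw [if_pos ⟨Representation.Equiv.refl ρ⟩, inv_mul_eq_one₀ (NeZero.ne _)] at h
  exact (FDRep.simple_iff_char_is_norm_one _).2 h.symm

theorem mem_charDegrees_iff [Finite G] {d : ℕ} :
    d ∈ charDegrees G ↔ ∃ (V : Type) (_ : AddCommGroup V) (_ : Module ℂ V)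
      (_ : FiniteDimensional ℂ V) (ρ : Representation ℂ G V),
      ρ.IsIrreducible ∧ finrank ℂ V = d := by
  constructor
  · rintro ⟨V, hV, rfl⟩
    exact ⟨V, _, _, inferInstance, V.ρ, isIrreducible_of_simple V, rfl⟩
  · rintro ⟨V, _, _, _, ρ, _, rfl⟩
    exact ⟨FDRep.of ρ, simple_of_isIrreducible ρ, rfl⟩

theorem finrank_mem_charDegrees [Finite G] [AddCommGroup V] [Module ℂ V] [FiniteDimensional ℂ V]
    (ρ : Representation ℂ G V) [ρ.IsIrreducible] : finrank ℂ V ∈ charDegrees G :=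
  ⟨FDRep.of ρ, simple_of_isIrreducible ρ, rfl⟩

theorem charDegrees_subset_of_surjective [Finite H] {f : H →* G} (hf : Function.Surjective f) :
    charDegrees G ⊆ charDegrees H := by
  rintro d ⟨V, hV, rfl⟩
  have := (isIrreducible_comp_iff hf (V.ρ : Representation ℂ G V)).2 (isIrreducible_of_simple V)
  exact finrank_mem_charDegrees (V.ρ.comp f : Representation ℂ H V)

theorem charDegrees_congr [Finite G] [Finite H] (e : G ≃* H) : charDegrees G = charDegrees H :=
  (charDegrees_subset_of_surjective (f := e.symm.toMonoidHom) e.symm.surjective).antisymm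
    (charDegrees_subset_of_surjective (f := e.toMonoidHom) e.surjective)

theorem charDegrees_of_isMulCommutative [Finite G] [IsMulCommutative G] : charDegrees G = 1 := by
  ext d
  rw [Set.mem_one, mem_charDegrees_iff]
  constructor
  · rintro ⟨V, _, _, _, ρ, _, rfl⟩
    exact IsIrreducible.finrank_eq_one_of_isMulCommutative ρ
  · rintro rfl
    refine ⟨ℂ, _, _, inferInstance, trivial ℂ G ℂ, ?_, finrank_self ℂ⟩
    refine isIrreducible_of_forall_eq_top _ fun X x hx hx0 ↦
      Subrepresentation.toSubmodule_injective ?_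
    exact (eq_bot_or_eq_top X.toSubmodule).resolve_left
      fun h ↦ hx0 ((Submodule.eq_bot_iff _).1 h x hx)

theorem charDegrees_prod [Finite G] [Finite H] :
    charDegrees (G × H) = charDegrees G * charDegrees H := by
  ext d
  simp only [Set.mem_mul, mem_charDegrees_iff]
  constructor
  · rintro ⟨V, _, _, _, ρ, _, rfl⟩
    have := nontrivial_of_isIrreducible ρ
    obtain ⟨v₀, hv₀⟩ := exists_ne (0 : V)
    obtain ⟨B, -, hB, b, hb, hb0⟩ := exists_isIrreducible_le_of_apply_ne_zero
      (ρ := (ρ.comp (MonoidHom.inr G H) : Representation ℂ H V)) (N := ⊤) LinearMap.id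
      ⟨v₀, Submodule.mem_top, hv₀⟩
    obtain ⟨A, hA, hAirr, m, hm, hmb⟩ := exists_isIrreducible_le_of_apply_ne_zero
      (N := equivariantMaps B.toRepresentation ρ) (LinearMap.applyₗ ⟨b, hb⟩)
      ⟨B.toSubmodule.subtype, fun h x ↦ rfl, hb0⟩
    have := isIrreducible_tprod_fst_snd A.toRepresentation B.toRepresentation
    let ev := equivariantMapsEval hA
    have hev : Function.Bijective ev := (IsIrreducible.bijective_or_eq_zero ev).resolve_right
      fun h0 ↦ hmb (congrArg (fun φ : IntertwiningMap _ ρ ↦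
        φ ((⟨m, hm⟩ : A.toSubmodule) ⊗ₜ ⟨b, hb⟩)) h0)
    exact ⟨_, ⟨A.toSubmodule, _, _, inferInstance, A.toRepresentation, hAirr, rfl⟩,
      _, ⟨B.toSubmodule, _, _, inferInstance, B.toRepresentation, hB, rfl⟩,
      (finrank_tensorProduct ..).symm.trans
        (LinearEquiv.ofBijective ev.toLinearMap hev).finrank_eq⟩
  · rintro ⟨_, ⟨A, _, _, _, ρ, _, rfl⟩, _, ⟨B, _, _, _, σ, _, rfl⟩, rfl⟩
    exact ⟨A ⊗[ℂ] B, _, _, inferInstance, _, isIrreducible_tprod_fst_snd ρ σ,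
      finrank_tensorProduct ..⟩

theorem charDegrees_pi {ι : Type} [Fintype ι] (G : ι → Type) [∀ i, Group (G i)]
    [∀ i, Finite (G i)] : charDegrees (∀ i, G i) = ∏ i, charDegrees (G i) := by
  refine Fintype.induction_empty_option
    (P := fun ι [Fintype ι] ↦ ∀ (G : ι → Type) [∀ i, Group (G i)] [∀ i, Finite (G i)],
      charDegrees (∀ i, G i) = ∏ i, charDegrees (G i)) ?_ ?_ ?_ ι G
  · intro α β _ e ih G _ _
    let _ := Fintype.ofEquiv β e.symm
    let E : (∀ i, G i) ≃* ∀ a, G (e a) :=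
      { (Equiv.piCongrLeft G e).symm with map_mul' := fun _ _ ↦ rfl }
    rw [charDegrees_congr E, ih]
    exact Fintype.prod_equiv e (fun a ↦ charDegrees (G (e a))) (fun b ↦ charDegrees (G b))
      fun _ ↦ rfl
  · intro G _ _
    simp [charDegrees_of_isMulCommutative]
  · intro α _ ih G _ _
    let E : (∀ i, G i) ≃* G none × ∀ i, G (some i) :=
      { Equiv.piOptionEquivProd with map_mul' := fun _ _ ↦ rfl }
    rw [charDegrees_congr E, charDegrees_prod, ih, Fintype.prod_option]

end CharDegrees

section SpecialLinear

variable {F : Type*} [Field F]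

/-- The upper unitriangular element of `SL(2, F)` with off-diagonal entry `x`. -/
def unip (x : F) : SL(2, F) := ⟨!![1, x; 0, 1], by simp⟩

/-- The diagonal element `diag(a, a⁻¹)` of `SL(2, F)`, as a homomorphism in `a`. -/
def torus : Fˣ →* SL(2, F) where
  toFun a := ⟨!![a, 0; 0, (a⁻¹ : Fˣ)], by simp⟩
  map_one' := by ext i j; fin_cases i <;> fin_cases j <;> simp
  map_mul' a b := by
    apply Subtype.ext
    change _ = !![(a : F), 0; 0, (a⁻¹ : Fˣ)] * !![(b : F), 0; 0, (b⁻¹ : Fˣ)]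
    simp [mul_comm]

/-- The representative `!![0, -1; 1, 0]` of the nontrivial Weyl group element of `SL(2, F)`. -/
def weyl : SL(2, F) := ⟨!![0, -1; 1, 0], by simp⟩

@[simp]
theorem coe_unip (x : F) : (unip x : Matrix (Fin 2) (Fin 2) F) = !![1, x; 0, 1] := rfl

@[simp]
theorem coe_torus (a : Fˣ) :
    (torus a : Matrix (Fin 2) (Fin 2) F) = !![(a : F), 0; 0, (a⁻¹ : Fˣ)] := rfl

@[simp]
theorem coe_weyl : ((weyl : SL(2, F)) : Matrix (Fin 2) (Fin 2) F) = !![0, -1; 1, 0] := rfl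

theorem mul_apply_fin_two (g h : SL(2, F)) (i j : Fin 2) :
    (g * h) i j = g i 0 * h 0 j + g i 1 * h 1 j := by
  simp [Matrix.mul_apply]

theorem unip_zero : unip (0 : F) = 1 := by
  ext i j; fin_cases i <;> fin_cases j <;> simp

theorem unip_add (x y : F) : unip (x + y) = unip x * unip y := by
  ext i j; fin_cases i <;> fin_cases j <;> simp [add_comm]

theorem torus_mul_unip (a : Fˣ) (x : F) :
    torus a * unip x = unip ((a : F) ^ 2 * x) * torus a := by
  ext i j; fin_cases i <;> fin_cases j <;> simp
  field_simp

theorem weyl_mul_torus (a : Fˣ) : weyl * torus a = torus a⁻¹ * weyl := by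
  ext i j; fin_cases i <;> fin_cases j <;> simp

theorem weyl_mul_weyl : weyl * weyl = (-1 : SL(2, F)) := by
  ext i j; fin_cases i <;> fin_cases j <;> simp

theorem weyl_mul_unip_mul_weyl (x : Fˣ) :
    weyl * unip (x : F) * weyl =
      unip (-(x : F)⁻¹) * (weyl * torus x) * unip (-(x : F)⁻¹) := by
  ext i j; fin_cases i <;> fin_cases j <;> simp

theorem det_fin_two_eq_one (g : SL(2, F)) : g 0 0 * g 1 1 - g 0 1 * g 1 0 = 1 := by
  rw [← Matrix.det_fin_two, g.det_coe]

theorem exists_eq_torus_mul_unip {g : SL(2, F)} (h : g 1 0 = 0) :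
    ∃ a y, g = torus a * unip y := by
  have hdet : g 0 0 * g 1 1 = 1 := by simpa [h] using det_fin_two_eq_one g
  have h0 : g 0 0 ≠ 0 := left_ne_zero_of_mul_eq_one hdet
  have hinv : g 1 1 = (g 0 0)⁻¹ := eq_inv_of_mul_eq_one_right hdet
  refine ⟨Units.mk0 _ h0, g 0 1 / g 0 0, ?_⟩
  ext i j
  fin_cases i <;> fin_cases j <;> simp [h, hinv, mul_div_cancel₀ _ h0]

theorem eq_unip_mul_weyl_mul_torus_mul_unip {g : SL(2, F)} {c : Fˣ} (h : g 1 0 = c) :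
    g = unip (g 0 0 / c) * (weyl * torus c) * unip (g 1 1 / c) := by
  have hdet := det_fin_two_eq_one g
  ext i j
  fin_cases i <;> fin_cases j <;> simp [h]
  · field_simp
    linear_combination -hdet - g 0 1 * h
  · field_simp

end SpecialLinear

theorem exists_addChar_isPrimitive (F : Type*) [Field F] [Finite F] :
    ∃ ψ : AddChar F ℂ, ψ.IsPrimitive := by
  obtain ⟨ψ, hψ⟩ := AddChar.exists_apply_ne_zero.2 (one_ne_zero (α := F))
  exact ⟨ψ, .of_ne_one fun h ↦ hψ (by simp [h])⟩

section UnipotentProjector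

variable {F V : Type*} [Field F] [AddCommGroup V] [Module ℂ V]

theorem torus_apply_torus_inv_apply (ρ : Representation ℂ SL(2, F) V) (a : Fˣ) (v : V) :
    ρ (torus a) (ρ (torus a⁻¹) v) = v := by
  rw [map_inv, ρ.self_inv_apply]

theorem weyl_apply_torus_apply (ρ : Representation ℂ SL(2, F) V) (a : Fˣ) (v : V) :
    ρ weyl (ρ (torus a) v) = ρ (torus a⁻¹) (ρ weyl v) := by
  simp only [← Module.End.mul_apply, ← map_mul, weyl_mul_torus]

theorem weyl_apply_weyl_apply {ρ : Representation ℂ SL(2, F) V} (hneg : ρ (-1) = 1) (v : V) :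
    ρ weyl (ρ weyl v) = v := by
  rw [← Module.End.mul_apply, ← map_mul, weyl_mul_weyl, hneg, Module.End.one_apply]

/-- The subspace of vectors fixed by the upper unitriangular subgroup of `SL(2, F)`. -/
def unipFixed (ρ : Representation ℂ SL(2, F) V) : Submodule ℂ V where
  carrier := {v | ∀ x, ρ (unip x) v = v}
  add_mem' hv hw x := by rw [map_add, hv, hw]
  zero_mem' _ := map_zero _
  smul_mem' c v hv x := by rw [map_smul, hv]

theorem torus_apply_mem_unipFixed {ρ : Representation ℂ SL(2, F) V} {v : V}
    (hv : v ∈ unipFixed ρ) (a : Fˣ) : ρ (torus a) v ∈ unipFixed ρ := fun x ↦ by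
  have h := torus_mul_unip a ((a : F)⁻¹ ^ 2 * x)
  rw [inv_pow, mul_inv_cancel_left₀ (by simp)] at h
  rw [← Module.End.mul_apply, ← map_mul, ← h, map_mul, Module.End.mul_apply, hv]

variable [Fintype F]

/-- The projector of a representation of `SL(2, F)` onto the subspace on which the upper
unitriangular subgroup acts through the additive character `x ↦ ψ (c * x)`. -/
noncomputable def unipProj (ψ : AddChar F ℂ) (ρ : Representation ℂ SL(2, F) V) (c : F) :
    Module.End ℂ V :=
  (Fintype.card F : ℂ)⁻¹ • ∑ x : F, ψ (-(c * x)) • ρ (unip x)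

variable (ψ : AddChar F ℂ) (ρ : Representation ℂ SL(2, F) V)

theorem unipProj_apply (c : F) (v : V) :
    unipProj ψ ρ c v = (Fintype.card F : ℂ)⁻¹ • ∑ x : F, ψ (-(c * x)) • ρ (unip x) v := by
  simp [unipProj]

theorem unip_unipProj (c y : F) (v : V) :
    ρ (unip y) (unipProj ψ ρ c v) = ψ (c * y) • unipProj ψ ρ c v := by
  rw [unipProj_apply, map_smul, smul_comm (ψ (c * y)), map_sum, Finset.smul_sum (r := ψ (c * y))]
  refine congrArg _ (Fintype.sum_equiv (Equiv.addLeft y) _ _ fun x ↦ ?_)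
  rw [Equiv.coe_addLeft, map_smul, unip_add, map_mul ρ, Module.End.mul_apply, smul_smul,
    ← AddChar.map_add_eq_mul]
  ring_nf

theorem unipProj_unip (c y : F) (v : V) :
    unipProj ψ ρ c (ρ (unip y) v) = ψ (c * y) • unipProj ψ ρ c v := by
  rw [unipProj_apply, unipProj_apply, smul_comm (ψ (c * y)), Finset.smul_sum (r := ψ (c * y))]
  refine congrArg _ (Fintype.sum_equiv (Equiv.addRight y) _ _ fun x ↦ ?_)
  rw [Equiv.coe_addRight, unip_add, map_mul ρ, Module.End.mul_apply, smul_smul,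
    ← AddChar.map_add_eq_mul]
  ring_nf

theorem unipProj_zero_mem_unipFixed (v : V) : unipProj ψ ρ 0 v ∈ unipFixed ρ := fun y ↦ by
  rw [unip_unipProj, zero_mul, AddChar.map_zero_eq_one, one_smul]

theorem torus_unipProj (a : Fˣ) (c : F) (v : V) :
    ρ (torus a) (unipProj ψ ρ c v) = unipProj ψ ρ (c * (a⁻¹ : Fˣ) ^ 2) (ρ (torus a) v) := by
  rw [unipProj_apply, unipProj_apply, map_smul, map_sum]
  refine congrArg _ (Fintype.sum_equiv (Equiv.mulLeft₀ ((a : F) ^ 2) (by simp)) _ _ fun x ↦ ?_)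
  simp only [Equiv.mulLeft₀_apply, map_smul, ← Module.End.mul_apply, ← map_mul, torus_mul_unip]
  congr 2
  simp [field]

theorem torus_unipProj_zero (a : Fˣ) (v : V) :
    ρ (torus a) (unipProj ψ ρ 0 v) = unipProj ψ ρ 0 (ρ (torus a) v) := by
  rw [torus_unipProj, zero_mul]

theorem coe_unipProj_toRepresentation {ρ : Representation ℂ SL(2, F) V} (X : Subrepresentation ρ)
    (c : F) (v : X.toSubmodule) :
    (unipProj ψ X.toRepresentation c v : V) = unipProj ψ ρ c v := by
  rw [unipProj_apply, unipProj_apply, Submodule.coe_smul, Submodule.coe_sum]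
  rfl

theorem unipProj_mem {ρ : Representation ℂ SL(2, F) V} (X : Subrepresentation ρ) (c : F) {v : V}
    (hv : v ∈ X) : unipProj ψ ρ c v ∈ X :=
  coe_unipProj_toRepresentation ψ X c ⟨v, hv⟩ ▸ Subtype.prop _

variable {ψ ρ}

theorem unipProj_eq_self {c : F} {v : V} (hv : ∀ y, ρ (unip y) v = ψ (c * y) • v) :
    unipProj ψ ρ c v = v := by
  simp [unipProj_apply, hv, smul_smul, ← AddChar.map_add_eq_mul, ← Nat.cast_smul_eq_nsmul ℂ]

theorem unipProj_zero_eq_self {v : V} (hv : v ∈ unipFixed ρ) : unipProj ψ ρ 0 v = v :=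
  unipProj_eq_self fun y ↦ by rw [hv, zero_mul, AddChar.map_zero_eq_one, one_smul]

theorem isIdempotentElem_unipProj (c : F) : IsIdempotentElem (unipProj ψ ρ c) :=
  LinearMap.ext fun v ↦ unipProj_eq_self fun y ↦ unip_unipProj ψ ρ c y v

theorem unipProj_eq_zero (hψ : ψ.IsPrimitive) {c d : F} (hcd : c ≠ d) {v : V}
    (hv : ∀ y, ρ (unip y) v = ψ (d * y) • v) : unipProj ψ ρ c v = 0 := by
  classical
  have hsum : ∑ x, ψ (x * (d - c)) = 0 := by
    simpa [sub_eq_zero, hcd.symm] using AddChar.sum_mulShift (d - c) hψ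
  have hexp (x : F) : -(c * x) + d * x = x * (d - c) := by ring
  rw [unipProj_apply]
  simp only [hv, smul_smul, ← Finset.sum_smul, ← AddChar.map_add_eq_mul, hexp, hsum, zero_smul,
    smul_zero]

theorem unipProj_eq_zero_of_mem_unipFixed (hψ : ψ.IsPrimitive) {c : F} (hc : c ≠ 0) {v : V}
    (hv : v ∈ unipFixed ρ) : unipProj ψ ρ c v = 0 :=
  unipProj_eq_zero hψ hc fun y ↦ by rw [hv, zero_mul, AddChar.map_zero_eq_one, one_smul]

theorem sum_unipProj (hψ : ψ.IsPrimitive) : ∑ c, unipProj ψ ρ c = 1 := by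
  classical
  have hsum (x : F) : ∑ c, ψ (-(c * x)) = if x = 0 then (Fintype.card F : ℂ) else 0 := by
    simpa [neg_eq_zero] using AddChar.sum_mulShift (-x) hψ
  simp only [unipProj, ← Finset.smul_sum]
  rw [Finset.sum_comm]
  simp [← Finset.sum_smul, hsum, unip_zero]

theorem sum_eq_zero_add_sum_units [DecidableEq F] {M : Type*} [AddCommMonoid M] (f : F → M) :
    ∑ x, f x = f 0 + ∑ x : Fˣ, f x := by
  rw [Fintype.sum_eq_add_sum_subtype_ne f 0]
  exact congrArg _ (Fintype.sum_equiv unitsEquivNeZero _ _ fun _ ↦ rfl).symm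

/- The Bruhat decomposition of `weyl * unip x * weyl` for `x ≠ 0`, averaged against characters of
the unipotent subgroup on both sides. -/
theorem unipProj_weyl_unipProj_weyl [DecidableEq F] (hneg : ρ (-1) = 1) (c d : F) {v : V}
    (hv : v ∈ unipFixed ρ) :
    unipProj ψ ρ d (ρ weyl (unipProj ψ ρ c (ρ weyl v))) =
      (Fintype.card F : ℂ)⁻¹ • (unipProj ψ ρ d v +
        ∑ x : Fˣ, ψ (-(c * x) - d * (x : F)⁻¹) • unipProj ψ ρ d (ρ weyl (ρ (torus x) v))) := by
  have hbruhat (x : Fˣ) : ρ weyl (ρ (unip (x : F)) (ρ weyl v)) =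
      ρ (unip (-(x : F)⁻¹)) (ρ weyl (ρ (torus x) v)) := by
    simpa only [map_mul, Module.End.mul_apply, hv (-(x : F)⁻¹)] using
      congrArg (ρ · v) (weyl_mul_unip_mul_weyl x)
  rw [unipProj_apply ψ ρ c, map_smul, map_smul, map_sum, map_sum, sum_eq_zero_add_sum_units]
  congr 2
  · simp [unip_zero, weyl_apply_weyl_apply hneg]
  · refine Fintype.sum_congr _ _ fun x ↦ ?_
    rw [map_smul, map_smul, hbruhat, unipProj_unip, smul_smul, ← AddChar.map_add_eq_mul]
    ring_nf

end UnipotentProjector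

section MultiplicityOne

theorem mul_comm_compression_of_span_eq_top {k A : Type*} [CommSemiring k] [Semiring A]
    [Algebra k A] {P : A} {S : Set A} (hS : Submodule.span k S = ⊤)
    (hcomm : ∀ a ∈ S, ∀ b ∈ S, P * a * P * b * P = P * b * P * a * P) (a b : A) :
    P * a * P * b * P = P * b * P * a * P := by
  have ha : a ∈ Submodule.span k S := hS ▸ Submodule.mem_top
  have hb : b ∈ Submodule.span k S := hS ▸ Submodule.mem_top
  induction ha, hb using Submodule.span_induction₂ with
  | mem_mem a b ha hb => exact hcomm a ha b hb
  | zero_left b _ => simp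
  | zero_right a _ => simp
  | add_left a a' b _ _ _ h h' => simp [mul_add, add_mul, h, h']
  | add_right a b b' _ _ _ h h' => simp [mul_add, add_mul, h, h']
  | smul_left r a b _ _ h => simp [h]
  | smul_right r a b _ _ h => simp [h]

theorem finrank_range_le_one_of_mul_comm_compression {k V : Type*} [Field k] [AddCommGroup V]
    [Module k V] {P : Module.End k V} (hP : IsIdempotentElem P)
    (hcomm : ∀ A B, P * A * P * B * P = P * B * P * A * P) :
    finrank k (LinearMap.range P) ≤ 1 := by
  have hfix {x : V} (hx : x ∈ LinearMap.range P) : P x = x := by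
    obtain ⟨z, rfl⟩ := hx
    exact LinearMap.congr_fun hP z
  by_cases hbot : LinearMap.range P = ⊥
  · rw [hbot, finrank_bot]
    exact zero_le_one
  obtain ⟨x, hx, hx0⟩ := Submodule.exists_mem_ne_zero_of_ne_bot hbot
  refine finrank_le_one ⟨x, hx⟩ fun ⟨y, hy⟩ ↦ ?_
  by_contra! hxy
  have hyx : y ∉ Submodule.span k {x} := fun h ↦ by
    obtain ⟨a, rfl⟩ := Submodule.mem_span_singleton.1 h
    exact hxy a rfl
  obtain ⟨φ, hφy, hφ⟩ := Submodule.exists_le_ker_of_notMem hyx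
  obtain ⟨φ', hφ'x, -⟩ := Submodule.exists_le_ker_of_notMem (show x ∉ (⊥ : Submodule k V) by simpa)
  have hφx : φ x = 0 := hφ (Submodule.mem_span_singleton_self x)
  -- Rank-one operators taking `y` to `x` and `x` to `y` do not commute on the range of `P`.
  have h := LinearMap.congr_fun (hcomm (φ.smulRight x) (φ'.smulRight y)) x
  simp [hfix hx, hfix hy, hφx, hφy, hφ'x, hx0] at h

variable {F V : Type*} [Field F] [AddCommGroup V] [Module ℂ V]

/-- The reflection of a matrix of determinant one across its antidiagonal. This is the
anti-automorphism used for Gelfand's trick. -/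
def antitranspose (g : SL(2, F)) : SL(2, F) :=
  ⟨!![g 1 1, g 0 1; g 1 0, g 0 0], by
    rw [Matrix.det_fin_two_of, mul_comm (g 1 1), det_fin_two_eq_one]⟩

@[simp]
theorem coe_antitranspose (g : SL(2, F)) :
    (antitranspose g : Matrix (Fin 2) (Fin 2) F) = !![g 1 1, g 0 1; g 1 0, g 0 0] := rfl

theorem antitranspose_mul (g h : SL(2, F)) :
    antitranspose (g * h) = antitranspose h * antitranspose g := by
  ext i j
  fin_cases i <;> fin_cases j <;> simp [Matrix.mul_apply] <;> ring

theorem antitranspose_unip (x : F) : antitranspose (unip x) = unip x := by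
  ext i j
  fin_cases i <;> fin_cases j <;> simp

/-- The multiplicity of the character `x ↦ ψ (c * x)` in the restriction of a representation of
`SL(2, F)` to the upper unitriangular subgroup. -/
noncomputable def unipMult [Fintype F] (ψ : AddChar F ℂ) (ρ : Representation ℂ SL(2, F) V)
    (c : F) : ℕ :=
  finrank ℂ (LinearMap.range (unipProj ψ ρ c))

variable [Fintype F] {ψ : AddChar F ℂ} (hψ : ψ.IsPrimitive)
  (ρ : Representation ℂ SL(2, F) V) {c : F} (hc : c ≠ 0)

include hψ hc

theorem unipProj_unipProj_eq_zero {g : SL(2, F)} (hg : g 1 0 = 0) (hg' : g 0 0 ^ 2 ≠ 1) (v : V) :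
    unipProj ψ ρ c (ρ g (unipProj ψ ρ c v)) = 0 := by
  obtain ⟨a, y, rfl⟩ := exists_eq_torus_mul_unip hg
  have ha : c ≠ c * (a⁻¹ : Fˣ) ^ 2 := fun h ↦ hg' <| by
    have := mul_left_cancel₀ hc ((mul_one c).trans h)
    simpa [eq_comm] using this
  rw [map_mul, Module.End.mul_apply, unip_unipProj, map_smul, map_smul, torus_unipProj,
    unipProj_eq_zero hψ ha fun y ↦ unip_unipProj .., smul_zero]

theorem unipProj_antitranspose_unipProj (g : SL(2, F)) (v : V) :
    unipProj ψ ρ c (ρ (antitranspose g) (unipProj ψ ρ c v)) =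
      unipProj ψ ρ c (ρ g (unipProj ψ ρ c v)) := by
  by_cases hg : g 1 0 = 0
  · have hdet : g 0 0 * g 1 1 = 1 := by simpa [hg] using det_fin_two_eq_one g
    have hdiag : g 1 1 ^ 2 = 1 → g 0 0 ^ 2 = 1 := fun h ↦ by
      linear_combination (g 0 0 * g 1 1 + 1) * hdet - g 0 0 ^ 2 * h
    by_cases hsq : g 0 0 ^ 2 = 1
    · have heq : g 1 1 = g 0 0 :=
        mul_left_cancel₀ (left_ne_zero_of_mul_eq_one hdet) (by rw [hdet, ← sq, hsq])
      have hself : antitranspose g = g := by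
        ext i j
        fin_cases i <;> fin_cases j <;> simp [heq]
      rw [hself]
    · rw [unipProj_unipProj_eq_zero hψ ρ hc hg hsq,
        unipProj_unipProj_eq_zero hψ ρ hc (by simpa using hg) (by simpa using mt hdiag hsq)]
  · have hbruhat := eq_unip_mul_weyl_mul_torus_mul_unip (g := g) (c := Units.mk0 _ hg) rfl
    have hbruhat' := eq_unip_mul_weyl_mul_torus_mul_unip (g := antitranspose g)
      (c := Units.mk0 _ hg) rfl
    rw [hbruhat']
    conv_rhs => rw [hbruhat]
    simp only [map_mul, Module.End.mul_apply, unip_unipProj, unipProj_unip, map_smul, smul_smul]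
    simp [mul_comm]

theorem unipProj_unipProj_comm (g h : SL(2, F)) (v : V) :
    unipProj ψ ρ c (ρ g (unipProj ψ ρ c (ρ h (unipProj ψ ρ c v)))) =
      unipProj ψ ρ c (ρ h (unipProj ψ ρ c (ρ g (unipProj ψ ρ c v)))) := by
  have hexpand (g h : SL(2, F)) : unipProj ψ ρ c (ρ g (unipProj ψ ρ c (ρ h (unipProj ψ ρ c v)))) =
      (Fintype.card F : ℂ)⁻¹ • ∑ x, ψ (-(c * x)) •
        unipProj ψ ρ c (ρ (g * unip x * h) (unipProj ψ ρ c v)) := by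
    rw [unipProj_apply ψ ρ c (ρ h _)]
    simp only [map_smul, map_sum, map_mul, Module.End.mul_apply]
  have hflip (x : F) : unipProj ψ ρ c (ρ (g * unip x * h) (unipProj ψ ρ c v)) =
      unipProj ψ ρ c (ρ (antitranspose h * unip x * antitranspose g) (unipProj ψ ρ c v)) := by
    rw [← unipProj_antitranspose_unipProj hψ ρ hc, antitranspose_mul, antitranspose_mul,
      antitranspose_unip, mul_assoc]
  rw [hexpand]
  simp only [hflip]
  rw [← hexpand, unipProj_antitranspose_unipProj hψ ρ hc g,
    unipProj_antitranspose_unipProj hψ ρ hc h]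

theorem unipMult_le_one [FiniteDimensional ℂ V] [ρ.IsIrreducible] : unipMult ψ ρ c ≤ 1 := by
  refine finrank_range_le_one_of_mul_comm_compression (isIdempotentElem_unipProj c)
    (mul_comm_compression_of_span_eq_top (span_range_eq_top ρ) ?_)
  rintro _ ⟨g, rfl⟩ _ ⟨h, rfl⟩
  exact LinearMap.ext fun v ↦ unipProj_unipProj_comm hψ ρ hc g h v

end MultiplicityOne

section SquareClasses

variable {F : Type*} [Field F]

theorem ne_zero_of_not_isSquare {c : F} (hc : ¬IsSquare c) : c ≠ 0 := fun h ↦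
  hc (h ▸ .zero)

theorem eq_of_isSquare_mul {α : Type*} {h : F → α} (hh : ∀ (a : Fˣ) x, h (x * a ^ 2) = h x)
    {x y : F} (hx : x ≠ 0) (hy : y ≠ 0) (hxy : IsSquare (x * y)) : h x = h y := by
  obtain ⟨b, hb⟩ := hxy
  have hb0 : b ≠ 0 := by
    rintro rfl
    simp [hx, hy] at hb
  rw [← hh (Units.mk0 (b / y) (div_ne_zero hb0 hy)) y]
  congr 1
  simp only [Units.val_mk0]
  field_simp
  linear_combination hb

variable [Fintype F]

theorem two_mul_sum_add_of_forall_mul_sq {h : F → ℕ} (hh : ∀ (a : Fˣ) x, h (x * a ^ 2) = h x)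
    {c : F} (hc : ¬IsSquare c) :
    2 * ∑ x, h x + (h 1 + h c) = 2 * h 0 + Fintype.card F * (h 1 + h c) := by
  classical
  have hc0 := ne_zero_of_not_isSquare hc
  have hpoint (x : F) : (2 * h x : ℤ) = (h 1 + h c) + quadraticChar F x * (h 1 - h c) +
      if x = 0 then (2 * h 0 - (h 1 + h c) : ℤ) else 0 := by
    rcases eq_or_ne x 0 with rfl | hx
    · simp
    rcases quadraticChar_dichotomy hx with hx1 | hx1
    · rw [hx1, if_neg hx, eq_of_isSquare_mul hh hx one_ne_zero
        (by simpa using (quadraticChar_one_iff_isSquare hx).1 hx1)]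
      ring
    · have hxc : IsSquare (x * c) := by
        rw [← quadraticChar_one_iff_isSquare (mul_ne_zero hx hc0), map_mul, hx1,
          quadraticChar_neg_one_iff_not_isSquare.2 hc]
        norm_num
      rw [hx1, if_neg hx, eq_of_isSquare_mul hh hx hc0 hxc]
      ring
  have hsum := Fintype.sum_congr _ _ hpoint
  rw [Finset.sum_add_distrib, Finset.sum_add_distrib, ← Finset.mul_sum, ← Finset.sum_mul,
    quadraticChar_sum_zero fun h ↦ hc (FiniteField.isSquare_of_char_two h c)] at hsum
  simp only [Finset.sum_const, Finset.card_univ, nsmul_eq_mul, Fintype.sum_ite_eq'] at hsum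
  zify
  linear_combination hsum

end SquareClasses

section Multiplicity

variable {F V : Type*} [Field F] [Fintype F] [AddCommGroup V] [Module ℂ V]
  {ψ : AddChar F ℂ} {ρ : Representation ℂ SL(2, F) V}

theorem unipMult_eq_zero {c : F} (h : ∀ v, unipProj ψ ρ c v = 0) : unipMult ψ ρ c = 0 := by
  rw [unipMult, LinearMap.ext (g := 0) h, LinearMap.range_zero, finrank_bot]

variable [FiniteDimensional ℂ V]

theorem unipMult_eq_one [ρ.IsIrreducible] (hψ : ψ.IsPrimitive) {c : F} (hc : c ≠ 0) {v : V}
    (hv : unipProj ψ ρ c v ≠ 0) : unipMult ψ ρ c = 1 := by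
  refine (unipMult_le_one hψ ρ hc).antisymm (Nat.one_le_iff_ne_zero.2 fun h ↦ hv ?_)
  rw [unipMult, Submodule.finrank_eq_zero, LinearMap.range_eq_bot] at h
  rw [h, LinearMap.zero_apply]

theorem finrank_eq_sum_unipMult (hψ : ψ.IsPrimitive) (ρ : Representation ℂ SL(2, F) V) :
    finrank ℂ V = ∑ c, unipMult ψ ρ c := by
  have htrace (c : F) : LinearMap.trace ℂ V (unipProj ψ ρ c) = unipMult ψ ρ c :=
    (LinearMap.isProj_range_iff_isIdempotentElem _).2 (isIdempotentElem_unipProj c) |>.trace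
  have h := congrArg (LinearMap.trace ℂ V) (sum_unipProj (ρ := ρ) hψ)
  simp only [map_sum, htrace, LinearMap.trace_one] at h
  exact_mod_cast h.symm

theorem unipMult_mul_inv_sq_le (c : F) (a : Fˣ) :
    unipMult ψ ρ (c * (a⁻¹ : Fˣ) ^ 2) ≤ unipMult ψ ρ c := by
  have hrange : LinearMap.range (unipProj ψ ρ (c * (a⁻¹ : Fˣ) ^ 2)) ≤
      (LinearMap.range (unipProj ψ ρ c)).map (ρ (torus a)) := by
    rintro _ ⟨v, rfl⟩
    refine ⟨unipProj ψ ρ c (ρ (torus a⁻¹) v), LinearMap.mem_range_self _ _, ?_⟩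
    rw [torus_unipProj, torus_apply_torus_inv_apply]
  exact (Submodule.finrank_mono hrange).trans (Submodule.finrank_map_le _ _)

theorem unipMult_mul_sq (a : Fˣ) (c : F) : unipMult ψ ρ (c * a ^ 2) = unipMult ψ ρ c := by
  have hle := unipMult_mul_inv_sq_le (ψ := ψ) (ρ := ρ) c a⁻¹
  have hge := unipMult_mul_inv_sq_le (ψ := ψ) (ρ := ρ) (c * a ^ 2) a
  rw [inv_inv] at hle
  rw [mul_assoc, ← mul_pow, Units.mul_inv, one_pow, mul_one] at hge
  exact hle.antisymm hge

theorem two_mul_finrank_add (hψ : ψ.IsPrimitive) {c : F} (hc : ¬IsSquare c) :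
    2 * finrank ℂ V + (unipMult ψ ρ 1 + unipMult ψ ρ c) =
      2 * unipMult ψ ρ 0 + Fintype.card F * (unipMult ψ ρ 1 + unipMult ψ ρ c) := by
  rw [finrank_eq_sum_unipMult hψ ρ]
  exact two_mul_sum_add_of_forall_mul_sq unipMult_mul_sq hc

theorem finrank_add_one_eq (hψ : ψ.IsPrimitive) (h : ∀ c ≠ 0, unipMult ψ ρ c = 1) :
    finrank ℂ V + 1 = unipMult ψ ρ 0 + Fintype.card F := by
  classical
  rw [finrank_eq_sum_unipMult hψ ρ, sum_eq_zero_add_sum_units,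
    Fintype.sum_congr _ _ fun c : Fˣ ↦ h c c.ne_zero]
  simp only [Finset.sum_const, Finset.card_univ, Fintype.card_units, smul_eq_mul, mul_one]
  have := Fintype.card_pos (α := F)
  lia

theorem finrank_add_one_eq_card_of_cuspidal [ρ.IsIrreducible] (hψ : ψ.IsPrimitive)
    (h0 : ∀ v, unipProj ψ ρ 0 v = 0) {c : F} (hc : ¬IsSquare c) {v w : V}
    (hv : unipProj ψ ρ 1 v ≠ 0) (hw : unipProj ψ ρ c w ≠ 0) :
    finrank ℂ V + 1 = Fintype.card F := by
  have h := two_mul_finrank_add (ρ := ρ) hψ hc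
  rw [unipMult_eq_zero h0, unipMult_eq_one hψ one_ne_zero hv,
    unipMult_eq_one hψ (ne_zero_of_not_isSquare hc) hw] at h
  lia

end Multiplicity

section BorelEigenvector

variable {F V : Type*} [Field F] [AddCommGroup V] [Module ℂ V]

/-- A Borel eigenvector of a representation of `SL(2, F)`: a nonzero vector fixed by the upper
unitriangular subgroup on which `torus a` acts as multiplication by `χ a`. -/
structure IsBorelEigenvector (ρ : Representation ℂ SL(2, F) V) (χ : Fˣ → ℂ) (v : V) : Prop where
  ne_zero : v ≠ 0
  mem_unipFixed : v ∈ unipFixed ρ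
  torus_apply : ∀ a, ρ (torus a) v = χ a • v

theorem exists_isBorelEigenvector [Finite F] [FiniteDimensional ℂ V]
    {ρ : Representation ℂ SL(2, F) V} {v : V} (hv : v ∈ unipFixed ρ) (hv0 : v ≠ 0) :
    ∃ χ w, IsBorelEigenvector ρ χ w := by
  let τ : Representation ℂ Fˣ V := ρ.comp torus
  let N : Subrepresentation τ := ⟨unipFixed ρ, fun a _ hw ↦ torus_apply_mem_unipFixed hw a⟩
  have : NeZero (Nat.card Fˣ : ℂ) := ⟨Nat.cast_ne_zero.2 Nat.card_pos.ne'⟩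
  obtain ⟨X, hXN, hX, w, hw, hw0⟩ :=
    exists_isIrreducible_le_of_apply_ne_zero (ρ := τ) LinearMap.id (N := N) ⟨v, hv, hv0⟩
  have hdim := IsIrreducible.finrank_eq_one_of_isMulCommutative X.toRepresentation
  rw [finrank_eq_one_iff_of_nonzero' ⟨w, hw⟩ (by simpa using hw0)] at hdim
  choose χ hχ using fun a ↦ hdim (X.toRepresentation a ⟨w, hw⟩)
  exact ⟨χ, w, hw0, hXN hw, fun a ↦ (congrArg Subtype.val (hχ a)).symm⟩

namespace IsBorelEigenvector

variable {ρ : Representation ℂ SL(2, F) V} {χ : Fˣ → ℂ} {v : V}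

section

variable [Fintype F] {ψ : AddChar F ℂ} (h : IsBorelEigenvector ρ χ v)

include h

theorem range_unipProj_le [ρ.IsIrreducible] (c : F) : LinearMap.range (unipProj ψ ρ c) ≤
    Submodule.span ℂ {unipProj ψ ρ c v, unipProj ψ ρ c (ρ weyl v)} := by
  rw [LinearMap.range_eq_map, ← span_range_apply_eq_top (ρ := ρ) h.ne_zero, Submodule.map_span_le]
  rintro _ ⟨g, rfl⟩
  beta_reduce
  by_cases hg : g 1 0 = 0
  · obtain ⟨a, y, rfl⟩ := exists_eq_torus_mul_unip hg
    rw [map_mul, Module.End.mul_apply, h.mem_unipFixed, h.torus_apply, map_smul]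
    exact Submodule.smul_mem _ _ (Submodule.subset_span (by simp))
  · rw [eq_unip_mul_weyl_mul_torus_mul_unip (g := g) (c := Units.mk0 _ hg) rfl]
    simp only [map_mul, Module.End.mul_apply, h.mem_unipFixed _, h.torus_apply, map_smul,
      unipProj_unip, smul_smul]
    exact Submodule.smul_mem _ _ (Submodule.subset_span (by simp))

theorem range_unipProj_zero [ρ.IsIrreducible] : LinearMap.range (unipProj ψ ρ 0) =
    Submodule.span ℂ {v, unipProj ψ ρ 0 (ρ weyl v)} := by
  have hv : unipProj ψ ρ 0 v = v := unipProj_zero_eq_self h.mem_unipFixed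
  refine le_antisymm (by simpa only [hv] using h.range_unipProj_le (ψ := ψ) 0) ?_
  rw [Submodule.span_le, Set.insert_subset_iff, Set.singleton_subset_iff]
  exact ⟨⟨v, hv⟩, LinearMap.mem_range_self _ _⟩

theorem unipProj_zero_weyl_unipProj_weyl [DecidableEq F] (hneg : ρ (-1) = 1) (c : F) :
    unipProj ψ ρ 0 (ρ weyl (unipProj ψ ρ c (ρ weyl v))) = (Fintype.card F : ℂ)⁻¹ •
      (v + (∑ x : Fˣ, ψ (-(c * x)) * χ x) • unipProj ψ ρ 0 (ρ weyl v)) := by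
  rw [unipProj_weyl_unipProj_weyl hneg c 0 h.mem_unipFixed, unipProj_zero_eq_self h.mem_unipFixed,
    Finset.sum_smul]
  simp only [h.torus_apply, map_smul, smul_smul, zero_mul, sub_zero]

theorem unipProj_weyl_ne_zero [DecidableEq F] (hneg : ρ (-1) = 1) {c : F}
    (hc : v + (∑ x : Fˣ, ψ (-(c * x)) * χ x) • unipProj ψ ρ 0 (ρ weyl v) ≠ 0) :
    unipProj ψ ρ c (ρ weyl v) ≠ 0 := fun h0 ↦ by
  have hrel := h.unipProj_zero_weyl_unipProj_weyl (ψ := ψ) hneg c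
  rw [h0, map_zero, map_zero] at hrel
  exact smul_ne_zero (by simp) hc hrel.symm

theorem unipProj_zero_weyl_ne_zero (hneg : ρ (-1) = 1) : unipProj ψ ρ 0 (ρ weyl v) ≠ 0 := by
  classical
  intro h0
  exact h.unipProj_weyl_ne_zero hneg (by simpa [h0] using h.ne_zero) h0

end

variable [Fintype F] {ψ : AddChar F ℂ} [ρ.IsIrreducible]

theorem range_unipProj_zero_eq_span_singleton (h : IsBorelEigenvector ρ χ v) {l : ℂ}
    (hl : l • v = unipProj ψ ρ 0 (ρ weyl v)) :
    LinearMap.range (unipProj ψ ρ 0) = Submodule.span ℂ {v} := by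
  rw [h.range_unipProj_zero, ← hl, Set.pair_comm, Submodule.span_insert_eq_span]
  exact Submodule.smul_mem _ _ (Submodule.mem_span_singleton_self v)

theorem unipMult_zero_eq_one (h : IsBorelEigenvector ρ χ v) {l : ℂ}
    (hl : l • v = unipProj ψ ρ 0 (ρ weyl v)) : unipMult ψ ρ 0 = 1 := by
  rw [unipMult, h.range_unipProj_zero_eq_span_singleton hl, finrank_span_singleton h.ne_zero]

theorem finrank_eq_card_add_one [FiniteDimensional ℂ V] (h : IsBorelEigenvector ρ χ v)
    (hψ : ψ.IsPrimitive) (hneg : ρ (-1) = 1)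
    (hli : LinearIndependent ℂ ![v, unipProj ψ ρ 0 (ρ weyl v)]) :
    finrank ℂ V = Fintype.card F + 1 := by
  classical
  have hzero : unipMult ψ ρ 0 = 2 := by
    rw [unipMult, h.range_unipProj_zero, ← Matrix.range_cons_cons_empty _ _ ![],
      finrank_span_eq_card hli, Fintype.card_fin]
  have hone (c : F) (hc : c ≠ 0) : unipMult ψ ρ c = 1 :=
    unipMult_eq_one hψ hc <| h.unipProj_weyl_ne_zero hneg fun hrel ↦ one_ne_zero
      (LinearIndependent.pair_iff.1 hli 1 _ (by rwa [one_smul])).1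
  have := finrank_add_one_eq hψ hone
  lia

end IsBorelEigenvector

end BorelEigenvector

section Dimensions

variable {F V : Type*} [Field F] [Fintype F] [AddCommGroup V] [Module ℂ V]
  [FiniteDimensional ℂ V] {ψ : AddChar F ℂ} {ρ : Representation ℂ SL(2, F) V} [ρ.IsIrreducible]

theorem finrank_cases_of_isIrreducible (hF : ringChar F ≠ 2) (hneg : ρ (-1) = 1) :
    finrank ℂ V = 1 ∨ 2 * finrank ℂ V + 1 = Fintype.card F ∨
      2 * finrank ℂ V = Fintype.card F + 1 ∨ finrank ℂ V + 1 = Fintype.card F ∨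
      finrank ℂ V = Fintype.card F ∨ finrank ℂ V = Fintype.card F + 1 := by
  obtain ⟨ψ, hψ⟩ := exists_addChar_isPrimitive F
  obtain ⟨c, hc⟩ := FiniteField.exists_nonsquare hF
  have hdim := two_mul_finrank_add (ρ := ρ) hψ hc
  have h1 := unipMult_le_one hψ ρ one_ne_zero
  have hc1 := unipMult_le_one hψ ρ (ne_zero_of_not_isSquare hc)
  have := nontrivial_of_isIrreducible ρ
  have hpos : 0 < finrank ℂ V := finrank_pos
  by_cases hcusp : ∀ v, unipProj ψ ρ 0 v = 0
  · rw [unipMult_eq_zero hcusp] at hdim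
    interval_cases unipMult ψ ρ 1 <;> interval_cases unipMult ψ ρ c <;> lia
  · push Not at hcusp
    obtain ⟨v, hv⟩ := hcusp
    obtain ⟨χ, w, hw⟩ := exists_isBorelEigenvector (unipProj_zero_mem_unipFixed ψ ρ v) hv
    by_cases hli : LinearIndependent ℂ ![w, unipProj ψ ρ 0 (ρ weyl w)]
    · exact .inr <| .inr <| .inr <| .inr <| .inr <| hw.finrank_eq_card_add_one hψ hneg hli
    · rw [LinearIndependent.pair_iff' hw.ne_zero] at hli
      push Not at hli
      obtain ⟨l, hl⟩ := hli
      rw [hw.unipMult_zero_eq_one hl] at hdim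
      interval_cases unipMult ψ ρ 1 <;> interval_cases unipMult ψ ρ c <;> lia

theorem finrank_eq_card_add_one_of_torus_sq_apply_ne (hψ : ψ.IsPrimitive) (hneg : ρ (-1) = 1)
    {a : Fˣ} {v : V} (hv : v ∈ unipFixed ρ) (hav : ρ (torus (a ^ 2)) v ≠ v) :
    finrank ℂ V = Fintype.card F + 1 := by
  have hv0 : v ≠ 0 := by
    rintro rfl
    simp at hav
  obtain ⟨χ, w, hw⟩ := exists_isBorelEigenvector hv hv0
  refine hw.finrank_eq_card_add_one hψ hneg ((LinearIndependent.pair_iff' hw.ne_zero).2 ?_)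
  intro l hl
  have hl0 : l ≠ 0 := by
    rintro rfl
    exact hw.unipProj_zero_weyl_ne_zero hneg (hl.symm.trans (zero_smul ℂ w))
  have hvw : v ∈ Submodule.span ℂ {w} :=
    hw.range_unipProj_zero_eq_span_singleton hl ▸ ⟨v, unipProj_zero_eq_self hv⟩
  obtain ⟨t, rfl⟩ := Submodule.mem_span_singleton.1 hvw
  -- Conjugation by `weyl` inverts the torus, so `torus a` and `torus a⁻¹` agree on `w`.
  have hinv : ρ (torus a) w = ρ (torus a⁻¹) w := smul_right_injective V hl0 <| by
    calc l • ρ (torus a) w = unipProj ψ ρ 0 (ρ weyl (ρ (torus a) w)) := by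
          simp only [hw.torus_apply, map_smul, ← hl, smul_comm l]
      _ = l • ρ (torus a⁻¹) w := by
          rw [weyl_apply_torus_apply, ← torus_unipProj_zero, ← hl, map_smul]
  refine hav ?_
  rw [map_smul, sq, map_mul, map_mul, Module.End.mul_apply, hinv, torus_apply_torus_inv_apply]

theorem finrank_eq_card_of_unipProj_zero_weyl (hψ : ψ.IsPrimitive) (hneg : ρ (-1) = 1) {v : V}
    (hv : IsBorelEigenvector ρ 1 v)
    (hwv : unipProj ψ ρ 0 (ρ weyl v) = -(Fintype.card F : ℂ)⁻¹ • v) :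
    finrank ℂ V = Fintype.card F := by
  classical
  have hone (c : F) (hc : c ≠ 0) : unipMult ψ ρ c = 1 := by
    have hsum : ∑ x : Fˣ, ψ (-(c * x)) = -1 := by
      have h := AddChar.sum_mulShift (-c) hψ
      rw [sum_eq_zero_add_sum_units, if_neg (neg_ne_zero.2 hc), zero_mul,
        AddChar.map_zero_eq_one] at h
      simp only [mul_neg, mul_comm _ c] at h
      linear_combination h
    refine unipMult_eq_one hψ hc <| hv.unipProj_weyl_ne_zero hneg ?_
    have hpos : (1 + (Fintype.card F : ℂ)⁻¹) ≠ 0 := by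
      field_simp
      exact div_ne_zero (Nat.cast_add_one_ne_zero _) (Nat.cast_ne_zero.2 Fintype.card_ne_zero)
    convert smul_ne_zero hpos hv.ne_zero using 1
    simp only [Pi.one_apply, mul_one, hsum, hwv]
    module
  have := finrank_add_one_eq hψ hone
  rw [hv.unipMult_zero_eq_one hwv.symm] at this
  lia

end Dimensions

section Constituents

variable {F V : Type*} [Field F] [AddCommGroup V] [Module ℂ V]
  {ρ : Representation ℂ SL(2, F) V}

theorem coe_toRepresentation_apply (X : Subrepresentation ρ) (g : SL(2, F)) (v : X.toSubmodule) :
    (X.toRepresentation g v : V) = ρ g v := rfl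

theorem toRepresentation_neg_one (hneg : ρ (-1) = 1) (X : Subrepresentation ρ) :
    X.toRepresentation (-1) = 1 :=
  LinearMap.ext fun v ↦ Subtype.ext (LinearMap.congr_fun hneg (v : V))

variable [Fintype F] {ψ : AddChar F ℂ}

theorem unipProj_zero_weyl_torus (a : Fˣ) (v : V) :
    unipProj ψ ρ 0 (ρ weyl (ρ (torus a) v)) = ρ (torus a⁻¹) (unipProj ψ ρ 0 (ρ weyl v)) := by
  rw [weyl_apply_torus_apply, torus_unipProj_zero]

theorem torus_unipProj_zero_weyl {v : V} (ht : ∀ a, ρ (torus a) v = v) (a : Fˣ) :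
    ρ (torus a) (unipProj ψ ρ 0 (ρ weyl v)) = unipProj ψ ρ 0 (ρ weyl v) := by
  rw [← inv_inv a, ← unipProj_zero_weyl_torus, ht]

/- This is the Hecke relation `(T - q) (T + 1) = 0` for `T = q • unipProj ψ ρ 0 * ρ weyl` on the
vectors fixed by the Borel subgroup. -/
theorem unipProj_zero_weyl_sub (hneg : ρ (-1) = 1) {v : V}
    (hv : v ∈ unipFixed ρ) (ht : ∀ a, ρ (torus a) v = v) :
    unipProj ψ ρ 0 (ρ weyl (unipProj ψ ρ 0 (ρ weyl v) - v)) =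
      -(Fintype.card F : ℂ)⁻¹ • (unipProj ψ ρ 0 (ρ weyl v) - v) := by
  classical
  have hcard : (Fintype.card Fˣ : ℂ) = Fintype.card F - 1 := by
    rw [Fintype.card_units, Nat.cast_sub Fintype.card_pos, Nat.cast_one]
  rw [map_sub, map_sub, unipProj_weyl_unipProj_weyl hneg 0 0 hv, unipProj_zero_eq_self hv]
  simp only [ht, zero_mul, neg_zero, sub_zero, AddChar.map_zero_eq_one, one_smul,
    Finset.sum_const, Finset.card_univ, ← Nat.cast_smul_eq_nsmul ℂ, hcard]
  match_scalars <;> first | (field_simp; ring) | field_simp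

variable [FiniteDimensional ℂ V]

theorem exists_finrank_eq_card_add_one (hneg : ρ (-1) = 1) {a : Fˣ} {v : V}
    (hv : v ∈ unipFixed ρ) (hav : ρ (torus (a ^ 2)) v ≠ v) :
    ∃ X : Subrepresentation ρ, X.toRepresentation.IsIrreducible ∧
      finrank ℂ X.toSubmodule = Fintype.card F + 1 := by
  obtain ⟨ψ, hψ⟩ := exists_addChar_isPrimitive F
  have : NeZero (Nat.card SL(2, F) : ℂ) := ⟨Nat.cast_ne_zero.2 Nat.card_pos.ne'⟩
  obtain ⟨X, -, hX, w, hwX, hw⟩ := exists_isIrreducible_le_of_apply_ne_zero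
    (N := (⊤ : Subrepresentation ρ)) ((ρ (torus (a ^ 2)) - 1) * unipProj ψ ρ 0)
    ⟨v, trivial, by simpa [unipProj_zero_eq_self hv, sub_eq_zero] using hav⟩
  refine ⟨X, hX, finrank_eq_card_add_one_of_torus_sq_apply_ne hψ
    (toRepresentation_neg_one hneg X) (a := a)
    (unipProj_zero_mem_unipFixed ψ X.toRepresentation ⟨w, hwX⟩) fun h ↦ hw (sub_eq_zero.2 ?_)⟩
  rw [← coe_unipProj_toRepresentation ψ X 0 ⟨w, hwX⟩]
  exact congrArg Subtype.val h

theorem exists_finrank_eq_card (hψ : ψ.IsPrimitive) (hneg : ρ (-1) = 1) {v : V}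
    (hv : v ∈ unipFixed ρ) (ht : ∀ a, ρ (torus a) v = v) (hwv : unipProj ψ ρ 0 (ρ weyl v) ≠ v) :
    ∃ X : Subrepresentation ρ, X.toRepresentation.IsIrreducible ∧
      finrank ℂ X.toSubmodule = Fintype.card F := by
  classical
  have : NeZero (Nat.card SL(2, F) : ℂ) := ⟨Nat.cast_ne_zero.2 Nat.card_pos.ne'⟩
  let borelSum : Module.End ℂ V := ∑ a : Fˣ, unipProj ψ ρ 0 * ρ (torus a)
  have hborel : borelSum v = (Fintype.card Fˣ : ℂ) • v := by
    simp [borelSum, ht, unipProj_zero_eq_self hv, ← Nat.cast_smul_eq_nsmul ℂ]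
  obtain ⟨X, -, hX, w, hwX, hw⟩ := exists_isIrreducible_le_of_apply_ne_zero
    (N := (⊤ : Subrepresentation ρ)) ((unipProj ψ ρ 0 * ρ weyl - 1) * borelSum)
    ⟨v, trivial, by simpa [hborel, ← smul_sub, sub_eq_zero] using hwv⟩
  let τ := X.toRepresentation
  let u : X.toSubmodule := ∑ a : Fˣ, unipProj ψ τ 0 (τ (torus a) ⟨w, hwX⟩)
  have hu : u ∈ unipFixed τ := Submodule.sum_mem _ fun a _ ↦ unipProj_zero_mem_unipFixed ψ τ _
  have hut (a : Fˣ) : τ (torus a) u = u := by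
    refine (map_sum _ _ _).trans (Fintype.sum_equiv (Equiv.mulLeft a) _ _ fun b ↦ ?_)
    rw [torus_unipProj_zero, Equiv.coe_mulLeft, map_mul torus, map_mul τ, Module.End.mul_apply]
  have hne : unipProj ψ τ 0 (τ weyl u) - u ≠ 0 := fun h ↦ hw <| by
    simpa [τ, u, borelSum, coe_unipProj_toRepresentation, coe_toRepresentation_apply]
      using congrArg Subtype.val h
  refine ⟨X, hX, finrank_eq_card_of_unipProj_zero_weyl hψ (toRepresentation_neg_one hneg X)
    ⟨hne, sub_mem (unipProj_zero_mem_unipFixed ψ τ _) hu, fun a ↦ ?_⟩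
    (unipProj_zero_weyl_sub (toRepresentation_neg_one hneg X) hu hut)⟩
  rw [map_sub, torus_unipProj_zero_weyl hut, hut, Pi.one_apply, one_smul]

end Constituents

section Cuspidal

variable {F V : Type*} [Field F] [Fintype F] [AddCommGroup V] [Module ℂ V] {ψ : AddChar F ℂ}
  {ρ : Representation ℂ SL(2, F) V}

theorem eq_zero_of_unipProj_zero_weyl_eq_zero (hneg : ρ (-1) = 1) {v : V} (hv : v ∈ unipFixed ρ)
    (h : unipProj ψ ρ 0 (ρ weyl v) = 0) : v = 0 := by
  classical
  have hrel := unipProj_weyl_unipProj_weyl (ψ := ψ) hneg 0 0 hv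
  simp only [unipProj_zero_weyl_torus, h, map_zero, smul_zero, Finset.sum_const_zero, add_zero,
    unipProj_zero_eq_self hv] at hrel
  exact (smul_eq_zero.1 hrel.symm).resolve_left (by simp)

theorem unipProj_zero_weyl_eq_sum [DecidableEq F] (hψ : ψ.IsPrimitive) (hneg : ρ (-1) = 1) {c : F}
    (hc : c ≠ 0) (hinj : ∀ v ∈ unipFixed ρ, unipProj ψ ρ c (ρ weyl v) = 0 → v = 0) {v : V}
    (hv : v ∈ unipFixed ρ) : unipProj ψ ρ 0 (ρ weyl v) =
      (Fintype.card F : ℂ)⁻¹ • ∑ x : Fˣ, ψ (-(c * (x : F)⁻¹)) • ρ (torus x) v := by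
  refine sub_eq_zero.1 (hinj _ (sub_mem (unipProj_zero_mem_unipFixed ψ ρ _)
    (Submodule.smul_mem _ _ (Submodule.sum_mem _ fun x _ ↦
      Submodule.smul_mem _ _ (torus_apply_mem_unipFixed hv x)))) ?_)
  rw [map_sub, map_sub, unipProj_weyl_unipProj_weyl hneg 0 c hv,
    unipProj_eq_zero_of_mem_unipFixed hψ hc hv]
  simp

/- Write `T c = unipProj ψ ρ c * ρ weyl`. If `T c` were injective on `unipFixed ρ`, then `T 0` would
be a combination of torus elements there. Commuting with the torus while also inverting it, `T 0`
would force the squares in the torus to act trivially. -/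
theorem exists_unipProj_weyl_eq_zero (hψ : ψ.IsPrimitive) (hneg : ρ (-1) = 1) {c : F} (hc : c ≠ 0)
    {a : Fˣ} {v : V} (hv : v ∈ unipFixed ρ) (hav : ρ (torus (a ^ 2)) v ≠ v) :
    ∃ w ∈ unipFixed ρ, unipProj ψ ρ c (ρ weyl w) = 0 ∧ w ≠ 0 := by
  classical
  by_contra! hinj
  have hcomm : unipProj ψ ρ 0 (ρ weyl (ρ (torus a) (ρ (torus a) v))) =
      ρ (torus a) (unipProj ψ ρ 0 (ρ weyl (ρ (torus a) v))) := by
    have hav := torus_apply_mem_unipFixed hv a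
    rw [unipProj_zero_weyl_eq_sum hψ hneg hc hinj hav,
      unipProj_zero_weyl_eq_sum hψ hneg hc hinj (torus_apply_mem_unipFixed hav a), map_smul,
      map_sum]
    simp only [map_smul, ← Module.End.mul_apply, ← map_mul, mul_comm a, mul_assoc]
  refine hav (sub_eq_zero.1 (eq_zero_of_unipProj_zero_weyl_eq_zero (ψ := ψ) hneg
    (sub_mem (torus_apply_mem_unipFixed hv _) hv) ?_))
  rw [map_sub, map_sub, sub_eq_zero, sq, map_mul, map_mul, Module.End.mul_apply, hcomm,
    unipProj_zero_weyl_torus, torus_apply_torus_inv_apply]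

theorem unipProj_mem_of_mem_orbitSpan (hψ : ψ.IsPrimitive) {c : F} (hc : c ≠ 0) {v : V}
    (hv : v ∈ orbitSpan ρ (unipFixed ρ : Set V)) :
    unipProj ψ ρ c v ∈ (unipFixed ρ).map (unipProj ψ ρ c * ρ weyl) := by
  have hle : (orbitSpan ρ (unipFixed ρ : Set V)).toSubmodule ≤
      ((unipFixed ρ).map (unipProj ψ ρ c * ρ weyl)).comap (unipProj ψ ρ c) := by
    refine Submodule.span_le.2 ?_
    rintro _ ⟨g, w, hw, rfl⟩
    change unipProj ψ ρ c (ρ g w) ∈ (unipFixed ρ).map (unipProj ψ ρ c * ρ weyl)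
    by_cases hg : g 1 0 = 0
    · obtain ⟨a, y, rfl⟩ := exists_eq_torus_mul_unip hg
      rw [map_mul, Module.End.mul_apply, hw,
        unipProj_eq_zero_of_mem_unipFixed hψ hc (torus_apply_mem_unipFixed hw a)]
      exact zero_mem _
    · rw [eq_unip_mul_weyl_mul_torus_mul_unip (g := g) (c := Units.mk0 _ hg) rfl]
      simp only [map_mul ρ, Module.End.mul_apply, hw _, unipProj_unip]
      exact Submodule.smul_mem _ _ ⟨_, torus_apply_mem_unipFixed hw _, rfl⟩
  exact hle hv

variable [FiniteDimensional ℂ V]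

theorem exists_isIrreducible_cuspidal (hψ : ψ.IsPrimitive) {c : F} (hc : c ≠ 0)
    (hle : finrank ℂ (unipFixed ρ) ≤ unipMult ψ ρ c) {w : V} (hw : w ∈ unipFixed ρ)
    (hcw : unipProj ψ ρ c (ρ weyl w) = 0) (hw0 : w ≠ 0) :
    ∃ X : Subrepresentation ρ, X.toRepresentation.IsIrreducible ∧
      (∀ v ∈ X, unipProj ψ ρ 0 v = 0) ∧ ∃ v ∈ X, unipProj ψ ρ c v ≠ 0 := by
  have : NeZero (Nat.card SL(2, F) : ℂ) := ⟨Nat.cast_ne_zero.2 Nat.card_pos.ne'⟩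
  have hlt : finrank ℂ ((unipFixed ρ).map (unipProj ψ ρ c * ρ weyl)) < unipMult ψ ρ c := by
    refine lt_of_lt_of_le ?_ hle
    rw [← LinearMap.range_domRestrict, ← LinearMap.finrank_range_add_finrank_ker
      ((unipProj ψ ρ c * ρ weyl).domRestrict (unipFixed ρ)), lt_add_iff_pos_right]
    exact Submodule.one_le_finrank_iff.2 ((Submodule.ne_bot_iff _).2
      ⟨⟨w, hw⟩, hcw, by simpa using hw0⟩)
  obtain ⟨C, hC⟩ := exists_isCompl (orbitSpan ρ (unipFixed ρ : Set V))
  have hex : ∃ v ∈ C, unipProj ψ ρ c v ≠ 0 := by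
    by_contra! hzero
    refine (Submodule.finrank_mono ?_).not_gt hlt
    rintro _ ⟨v, rfl⟩
    obtain ⟨x, hx, y, hy, rfl⟩ :=
      Submodule.mem_sup.1 (hC.sup_eq_top ▸ (trivial : v ∈ (⊤ : Submodule ℂ V)) :
        v ∈ (orbitSpan ρ (unipFixed ρ : Set V) ⊔ C).toSubmodule)
    rw [map_add, hzero y hy, add_zero]
    exact unipProj_mem_of_mem_orbitSpan hψ hc hx
  obtain ⟨X, hXC, hX, hvX⟩ := exists_isIrreducible_le_of_apply_ne_zero _ hex
  refine ⟨X, hX, fun v hv ↦ ?_, hvX⟩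
  exact (hC.inf_eq_bot ▸ ⟨subset_orbitSpan ρ _ (unipProj_zero_mem_unipFixed ψ ρ v),
    unipProj_mem ψ C 0 (hXC hv)⟩ : unipProj ψ ρ 0 v ∈ (⊥ : Subrepresentation ρ))

theorem exists_finrank_add_one_eq_card (hψ : ψ.IsPrimitive) (hneg : ρ (-1) = 1)
    (hF : ringChar F ≠ 2) {a : Fˣ} {v : V} (hv : v ∈ unipFixed ρ) (hav : ρ (torus (a ^ 2)) v ≠ v)
    (hle : ∀ c, finrank ℂ (unipFixed ρ) ≤ unipMult ψ ρ c)
    (hone : ∀ X : Subrepresentation ρ, ∀ v ∈ X, v ≠ 0 → ∃ w ∈ X, unipProj ψ ρ 1 w ≠ 0) :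
    ∃ X : Subrepresentation ρ, X.toRepresentation.IsIrreducible ∧
      finrank ℂ X.toSubmodule + 1 = Fintype.card F := by
  obtain ⟨c, hc⟩ := FiniteField.exists_nonsquare hF
  have hc0 := ne_zero_of_not_isSquare hc
  obtain ⟨w, hw, hcw, hw0⟩ := exists_unipProj_weyl_eq_zero hψ hneg hc0 hv hav
  obtain ⟨X, hX, hcusp, x, hx, hcx⟩ := exists_isIrreducible_cuspidal hψ hc0 (hle c) hw hcw hw0
  obtain ⟨y, hy, hy1⟩ := hone X x hx (by rintro rfl; simp at hcx)
  have hcoe {b : F} {z : V} (hz : z ∈ X) (hbz : unipProj ψ ρ b z ≠ 0) :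
      unipProj ψ X.toRepresentation b ⟨z, hz⟩ ≠ 0 := fun h ↦
    hbz (coe_unipProj_toRepresentation ψ X b ⟨z, hz⟩ ▸ congrArg Subtype.val h)
  refine ⟨X, hX, finrank_add_one_eq_card_of_cuspidal hψ (fun z ↦ Subtype.ext ?_) hc
    (hcoe hy hy1) (hcoe hx hcx)⟩
  exact (coe_unipProj_toRepresentation ψ X 0 z).trans (hcusp z z.2)

end Cuspidal

section Whittaker

/-- The representation of `G` on its complex-valued functions by right translation. -/
def rightTranslation (G : Type*) [Group G] : Representation ℂ G (G → ℂ) where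
  toFun g := LinearMap.funLeft ℂ ℂ (· * g)
  map_one' := by ext; simp [LinearMap.funLeft_apply]
  map_mul' g h := by ext; simp [LinearMap.funLeft_apply, mul_assoc]

theorem rightTranslation_apply {G : Type*} [Group G] (g : G) (f : G → ℂ) (x : G) :
    rightTranslation G g f x = f (x * g) := rfl

variable {F : Type*} [Field F]

/-- The even functions on `SL(2, F)` that transform through `ψ` under left translation by the upper
unitriangular subgroup; for nontrivial `ψ`, the Gelfand-Graev representation of `PSL(2, F)`. -/
def whittaker (ψ : AddChar F ℂ) : Subrepresentation (rightTranslation SL(2, F)) where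
  toSubmodule :=
    { carrier := {f | (∀ g, f (-g) = f g) ∧ ∀ x g, f (unip x * g) = ψ x * f g}
      add_mem' := by
        rintro f₁ f₂ ⟨h₁, h₁'⟩ ⟨h₂, h₂'⟩
        exact ⟨fun g ↦ by simp [h₁, h₂], fun x g ↦ by simp [h₁', h₂', mul_add]⟩
      zero_mem' := ⟨fun _ ↦ rfl, fun _ _ ↦ by simp⟩
      smul_mem' := by
        rintro c f ⟨h, h'⟩
        exact ⟨fun g ↦ by simp [h], fun x g ↦ by simp [h', mul_left_comm]⟩ }
  apply_mem_toSubmodule g f hf :=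
    ⟨fun h ↦ by simpa [rightTranslation_apply] using hf.1 (h * g), fun x h ↦ by
      simpa [rightTranslation_apply, mul_assoc] using hf.2 x (h * g)⟩

theorem whittaker_neg_one (ψ : AddChar F ℂ) : (whittaker ψ).toRepresentation (-1) = 1 := by
  refine LinearMap.ext fun f ↦ Subtype.ext (funext fun g ↦ ?_)
  rw [coe_toRepresentation_apply, rightTranslation_apply, mul_neg, mul_one, f.2.1,
    Module.End.one_apply]

theorem exists_torus_apply_ne (ψ : AddChar F ℂ) {b : Fˣ} (hb : b ^ 2 ≠ 1) :
    ∃ v ∈ unipFixed (whittaker ψ).toRepresentation,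
      (whittaker ψ).toRepresentation (torus b) v ≠ v := by
  classical
  let f : SL(2, F) → ℂ := fun g ↦ if g 1 0 ^ 2 = 1 then ψ (g 0 0 / g 1 0) else 0
  have hf : f ∈ whittaker ψ := by
    refine ⟨fun g ↦ by simp only [f, Matrix.SpecialLinearGroup.coe_neg, Matrix.neg_apply, neg_sq,
      neg_div_neg_eq], fun x g ↦ ?_⟩
    by_cases hg : g 1 0 = 0
    · simp [f, mul_apply_fin_two, hg]
    · simp [f, mul_apply_fin_two, ← AddChar.map_add_eq_mul, add_div, hg, add_comm]
  refine ⟨⟨f, hf⟩, fun x ↦ Subtype.ext (funext fun g ↦ ?_), fun h ↦ ?_⟩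
  · simp [f, coe_toRepresentation_apply, rightTranslation_apply, mul_apply_fin_two]
  · have h1 : f (weyl * torus b) = f weyl := congrFun (congrArg Subtype.val h) weyl
    have hb' : (b : F) ^ 2 ≠ 1 := fun e ↦ hb (Units.ext (by simpa using e))
    simp_all [f, mul_apply_fin_two]

variable {ψ : AddChar F ℂ}

theorem apply_eq_zero_of_mem_unipFixed (hψ : ψ.IsPrimitive) {f : (whittaker ψ).toSubmodule}
    (hf : f ∈ unipFixed (whittaker ψ).toRepresentation) {g : SL(2, F)} (hg : g 1 0 = 0) :
    f.1 g = 0 := by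
  obtain ⟨a, y, rfl⟩ := exists_eq_torus_mul_unip hg
  have hright (x : F) (g : SL(2, F)) : f.1 (g * unip x) = f.1 g :=
    congrFun (congrArg Subtype.val (hf x)) g
  obtain ⟨x, hx⟩ : ∃ x, ψ ((a : F) ^ 2 * x) ≠ 1 := by
    simpa [AddChar.mulShift_apply] using AddChar.ne_one_iff.1 (hψ (a := (a : F) ^ 2) (by simp))
  have htwist : ψ ((a : F) ^ 2 * x) * f.1 (torus a) = f.1 (torus a) := by
    rw [← f.2.2, ← torus_mul_unip, hright]
  rw [hright]
  exact (mul_left_eq_self₀.1 htwist).resolve_left hx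

variable [Fintype F]

theorem exists_borel_fixed (ψ : AddChar F ℂ) :
    ∃ v ∈ unipFixed (whittaker (1 : AddChar F ℂ)).toRepresentation,
      (∀ a, (whittaker (1 : AddChar F ℂ)).toRepresentation (torus a) v = v) ∧
      unipProj ψ (whittaker (1 : AddChar F ℂ)).toRepresentation 0
        ((whittaker (1 : AddChar F ℂ)).toRepresentation weyl v) ≠ v := by
  classical
  let f : SL(2, F) → ℂ := fun g ↦ if g 1 0 = 0 then 1 else 0
  have hf : f ∈ whittaker 1 :=
    ⟨fun g ↦ by simp [f], fun x g ↦ by simp [f, mul_apply_fin_two]⟩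
  refine ⟨⟨f, hf⟩, fun x ↦ Subtype.ext (funext fun g ↦ ?_),
    fun a ↦ Subtype.ext (funext fun g ↦ ?_), fun h ↦ ?_⟩
  · simp [f, coe_toRepresentation_apply, rightTranslation_apply, mul_apply_fin_two]
  · simp [f, coe_toRepresentation_apply, rightTranslation_apply, mul_apply_fin_two]
  · have h1 := congrFun (congrArg Subtype.val h) 1
    rw [coe_unipProj_toRepresentation, unipProj_apply] at h1
    simp [f, coe_toRepresentation_apply, rightTranslation_apply, mul_apply_fin_two] at h1

theorem finrank_unipFixed_le_unipMult (hψ : ψ.IsPrimitive) (c : F) :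
    finrank ℂ (unipFixed (whittaker ψ).toRepresentation) ≤
      unipMult ψ (whittaker ψ).toRepresentation c := by
  classical
  -- Multiplication by `m` makes `unip x` act by `ψ (c * x)` on functions that it fixes.
  let m : SL(2, F) → ℂ := fun g ↦ if g 1 0 = 0 then 0 else ψ (c * (g 1 1 / g 1 0))
  have hm (f) (hf : f ∈ (whittaker ψ).toSubmodule) : m * f ∈ (whittaker ψ).toSubmodule :=
    ⟨fun g ↦ by simp [m, hf.1], fun x g ↦ by simp [m, hf.2, mul_apply_fin_two, mul_left_comm]⟩
  let M := (LinearMap.mulLeft ℂ m).restrict hm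
  have hM (f) (hf : f ∈ unipFixed (whittaker ψ).toRepresentation) :
      M f ∈ LinearMap.range (unipProj ψ (whittaker ψ).toRepresentation c) := by
    refine ⟨M f, unipProj_eq_self fun x ↦ Subtype.ext (funext fun g ↦ ?_)⟩
    have hfx : f.1 (g * unip x) = f.1 g := congrFun (congrArg Subtype.val (hf x)) g
    suffices m (g * unip x) * f.1 (g * unip x) = ψ (c * x) * (m g * f.1 g) from this
    by_cases hg : g 1 0 = 0
    · simp [m, mul_apply_fin_two, hg]
    · simp [m, mul_apply_fin_two, hg, hfx, ← mul_assoc, ← AddChar.map_add_eq_mul]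
      field_simp
      simp
  refine LinearMap.finrank_le_finrank_of_injective (f := M.restrict hM)
    ((injective_iff_map_eq_zero _).2 ?_)
  rintro ⟨f, hf⟩ h
  refine Subtype.ext (Subtype.ext (funext fun g ↦ ?_))
  by_cases hg : g 1 0 = 0
  · exact apply_eq_zero_of_mem_unipFixed hψ hf hg
  · have hmg : m g * f.1 g = 0 := congrFun (congrArg (fun z ↦ z.1.1) h) g
    exact (mul_eq_zero.1 hmg).resolve_left (by simp [m, hg, (ψ.val_isUnit _).ne_zero])

theorem exists_unipProj_one_ne_zero (X : Subrepresentation (whittaker ψ).toRepresentation)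
    {v : (whittaker ψ).toSubmodule} (hv : v ∈ X) (hv0 : v ≠ 0) :
    ∃ w ∈ X, unipProj ψ (whittaker ψ).toRepresentation 1 w ≠ 0 := by
  have heval (w : (whittaker ψ).toSubmodule) :
      (unipProj ψ (whittaker ψ).toRepresentation 1 w).1 1 = w.1 1 := by
    have hw (x : F) : w.1 (unip x) = ψ x * w.1 1 := by simpa using w.2.2 x 1
    rw [coe_unipProj_toRepresentation, unipProj_apply]
    simp [rightTranslation_apply, hw, ← mul_assoc, ← AddChar.map_add_eq_mul]
  obtain ⟨g, hg⟩ := Function.ne_iff.1 (Subtype.coe_ne_coe.2 hv0)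
  refine ⟨_, X.apply_mem_toSubmodule g hv, fun h ↦ hg ?_⟩
  have h1 := heval ((whittaker ψ).toRepresentation g v)
  rw [h, coe_toRepresentation_apply, rightTranslation_apply, one_mul] at h1
  exact h1.symm

end Whittaker

section ProjectiveSpecialLinear

theorem mem_center_specialLinear_fin_two {F : Type*} [Field F] {g : SL(2, F)} :
    g ∈ Subgroup.center SL(2, F) ↔ g = 1 ∨ g = -1 := by
  constructor
  · rw [Matrix.SpecialLinearGroup.mem_center_iff, Fintype.card_fin]
    rintro ⟨r, hr, hg⟩
    obtain rfl | rfl := sq_eq_one_iff.1 hr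
    · exact .inl (Subtype.ext (by rw [← hg, map_one, Matrix.SpecialLinearGroup.coe_one]))
    · exact .inr (Subtype.ext (by
        rw [← hg, map_neg, map_one, Matrix.SpecialLinearGroup.coe_neg,
          Matrix.SpecialLinearGroup.coe_one]))
  · rintro (rfl | rfl)
    exacts [one_mem _, Subgroup.mem_center_iff.2 fun g ↦ by simp]

variable {F : Type} [Field F]

theorem finrank_mem_charDegrees_psl [Finite F] {V : Type} [AddCommGroup V] [Module ℂ V]
    [FiniteDimensional ℂ V] {ρ : Representation ℂ SL(2, F) V} (hρ : ρ.IsIrreducible)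
    (hneg : ρ (-1) = 1) : finrank ℂ V ∈ charDegrees PSL(2, F) := by
  have hker : Subgroup.center SL(2, F) ≤ ρ.ker := fun g hg ↦ by
    obtain rfl | rfl := mem_center_specialLinear_fin_two.1 hg
    exacts [map_one ρ, hneg]
  let ρ' : Representation ℂ PSL(2, F) V := QuotientGroup.lift _ ρ hker
  have : ρ'.IsIrreducible := (isIrreducible_comp_iff (QuotientGroup.mk'_surjective _) ρ').1 hρ
  exact finrank_mem_charDegrees ρ'

variable [Fintype F]

theorem dvd_of_mem_charDegrees_psl (hF : ringChar F ≠ 2) {d : ℕ}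
    (hd : d ∈ charDegrees PSL(2, F)) :
    d ∣ Fintype.card F - 1 ∨ d ∣ Fintype.card F ∨ d ∣ Fintype.card F + 1 := by
  obtain ⟨V, _, _, _, ρ, hρ, rfl⟩ := mem_charDegrees_iff.1 hd
  let π : SL(2, F) →* PSL(2, F) := QuotientGroup.mk' _
  have hirr : IsIrreducible (ρ.comp π : Representation ℂ SL(2, F) V) :=
    (isIrreducible_comp_iff (QuotientGroup.mk'_surjective _) ρ).2 hρ
  have hπ : π (-1) = 1 :=
    (QuotientGroup.eq_one_iff _).2 (mem_center_specialLinear_fin_two.2 (.inr rfl))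
  have hneg : (ρ.comp π : Representation ℂ SL(2, F) V) (-1) = 1 := by
    rw [MonoidHom.comp_apply, hπ, map_one]
  obtain h | h | h | h | h | h := finrank_cases_of_isIrreducible hF hneg
  · exact .inl (by simp [h])
  · exact .inl ⟨2, by omega⟩
  · exact .inr (.inr ⟨2, by omega⟩)
  · exact .inl ⟨1, by omega⟩
  · exact .inr (.inl h.dvd)
  · exact .inr (.inr h.dvd)

theorem card_mem_charDegrees_psl : Fintype.card F ∈ charDegrees PSL(2, F) := by
  obtain ⟨ψ, hψ⟩ := exists_addChar_isPrimitive F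
  obtain ⟨v, hv, ht, hwv⟩ := exists_borel_fixed ψ
  obtain ⟨X, hX, hcard⟩ := exists_finrank_eq_card hψ (whittaker_neg_one 1) hv ht hwv
  exact hcard ▸ finrank_mem_charDegrees_psl hX
    (toRepresentation_neg_one (whittaker_neg_one 1) X)

theorem exists_sq_sq_ne_one (hcard : 5 < Fintype.card F) : ∃ a : Fˣ, (a ^ 2) ^ 2 ≠ 1 := by
  classical
  obtain ⟨a, ha⟩ := exists_pow_ne_one_of_isCyclic (G := Fˣ) four_ne_zero
    (by rw [Nat.card_eq_fintype_card, Fintype.card_units]; omega)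
  exact ⟨a, by rwa [← pow_mul]⟩

theorem card_add_one_mem_charDegrees_psl (hcard : 5 < Fintype.card F) :
    Fintype.card F + 1 ∈ charDegrees PSL(2, F) := by
  obtain ⟨a, ha⟩ := exists_sq_sq_ne_one hcard
  obtain ⟨v, hv, hav⟩ := exists_torus_apply_ne 1 ha
  obtain ⟨X, hX, hfinrank⟩ := exists_finrank_eq_card_add_one (whittaker_neg_one 1) hv hav
  exact hfinrank ▸ finrank_mem_charDegrees_psl hX
    (toRepresentation_neg_one (whittaker_neg_one 1) X)

theorem card_sub_one_mem_charDegrees_psl (hF : ringChar F ≠ 2) (hcard : 5 < Fintype.card F) :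
    Fintype.card F - 1 ∈ charDegrees PSL(2, F) := by
  obtain ⟨a, ha⟩ := exists_sq_sq_ne_one hcard
  obtain ⟨ψ, hψ⟩ := exists_addChar_isPrimitive F
  obtain ⟨v, hv, hav⟩ := exists_torus_apply_ne ψ ha
  obtain ⟨X, hX, hfinrank⟩ := exists_finrank_add_one_eq_card hψ (whittaker_neg_one ψ) hF hv hav
    (finrank_unipFixed_le_unipMult hψ) fun X _ ↦ exists_unipProj_one_ne_zero X
  exact (Nat.eq_sub_of_add_eq hfinrank) ▸ finrank_mem_charDegrees_psl hX
    (toRepresentation_neg_one (whittaker_neg_one ψ) X)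

end ProjectiveSpecialLinear

section Products

theorem card_biUnion_of_pairwise_inter_subset {ι α : Type*} [DecidableEq α] {s : Finset ι}
    (hs : s.Nonempty) {A : ι → Finset α} {S : Finset α} {k : ℕ} (hS : ∀ i ∈ s, S ⊆ A i)
    (hk : ∀ i ∈ s, (A i \ S).card = k) (hinter : (s : Set ι).Pairwise fun i j ↦ A i ∩ A j ⊆ S) :
    (s.biUnion A).card = k * s.card + S.card := by
  obtain ⟨i₀, hi₀⟩ := hs
  have hsub : S ⊆ s.biUnion A := (hS i₀ hi₀).trans (Finset.subset_biUnion_of_mem A hi₀)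
  have hsdiff : s.biUnion A \ S = s.biUnion fun i ↦ A i \ S := by ext; aesop
  have hdisj : (s : Set ι).PairwiseDisjoint fun i ↦ A i \ S := fun i hi j hj hij ↦
    Finset.disjoint_left.2 fun a hai haj ↦ (Finset.mem_sdiff.1 hai).2 <|
      hinter hi hj hij (Finset.mem_inter.2 ⟨Finset.sdiff_subset hai, Finset.sdiff_subset haj⟩)
  rw [← Finset.card_sdiff_add_card_eq_card hsub, hsdiff, Finset.card_biUnion hdisj,
    Finset.sum_const_nat hk, mul_comm]

theorem primeFactors_finsetProd {ι : Type*} {s : Finset ι} {d : ι → ℕ} (hd : ∀ i ∈ s, d i ≠ 0) :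
    (∏ i ∈ s, d i).primeFactors = s.biUnion fun i ↦ (d i).primeFactors := by
  ext r
  simp only [Finset.mem_biUnion, Nat.mem_primeFactors_of_ne_zero (Finset.prod_ne_zero_iff.2 hd)]
  constructor
  · rintro ⟨hr, hdvd⟩
    obtain ⟨i, hi, hri⟩ := (hr.prime.dvd_finsetProd_iff _).1 hdvd
    exact ⟨i, hi, hr.mem_primeFactors hri (hd i hi)⟩
  · rintro ⟨i, hi, hri⟩
    exact ⟨Nat.prime_of_mem_primeFactors hri,
      (Nat.dvd_of_mem_primeFactors hri).trans (Finset.dvd_prod_of_mem d hi)⟩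

theorem ne_zero_of_mem_charDegrees {G : Type} [Group G] [Finite G] {d : ℕ}
    (hd : d ∈ charDegrees G) : d ≠ 0 := by
  obtain ⟨V, _, _, _, ρ, hρ, rfl⟩ := mem_charDegrees_iff.1 hd
  have := nontrivial_of_isIrreducible ρ
  exact finrank_pos.ne'

theorem primeFactors_subset_rhoSet {G : Type} [Group G] {d : ℕ} (hd : d ∈ charDegrees G) :
    ↑d.primeFactors ⊆ rhoSet G := fun _ hr ↦
  ⟨Nat.prime_of_mem_primeFactors hr, d, hd, Nat.dvd_of_mem_primeFactors hr⟩

variable {ι : Type} {G : ι → Type} [∀ i, Group (G i)] [∀ i, Finite (G i)]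

theorem rhoSet_pi [Finite ι] : rhoSet (∀ i, G i) = ⋃ i, rhoSet (G i) := by
  classical
  cases nonempty_fintype ι
  ext r
  simp only [Set.mem_iUnion]
  constructor
  · rintro ⟨hr, d, hd, hrd⟩
    rw [charDegrees_pi, Set.mem_fintype_prod] at hd
    obtain ⟨e, he, rfl⟩ := hd
    obtain ⟨i, -, hri⟩ := (hr.prime.dvd_finsetProd_iff _).1 hrd
    exact ⟨i, hr, e i, he i, hri⟩
  · rintro ⟨i, hr, d, hd, hrd⟩
    exact ⟨hr, d, charDegrees_subset_of_surjective (f := Pi.evalMonoidHom G i)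
      (Function.surjective_eval i) hd, hrd⟩

variable [Fintype ι] {S : Finset ℕ}

theorem card_primeFactors_le_of_mem_charDegrees_pi {k : ℕ}
    (hle : ∀ i, ∀ d ∈ charDegrees (G i), (d.primeFactors \ S).card ≤ k) {d : ℕ}
    (hd : d ∈ charDegrees (∀ i, G i)) : d.primeFactors.card ≤ k * Fintype.card ι + S.card := by
  classical
  rw [charDegrees_pi, Set.mem_fintype_prod] at hd
  obtain ⟨e, he, rfl⟩ := hd
  rw [primeFactors_finsetProd fun i _ ↦ ne_zero_of_mem_charDegrees (he i)]
  calc (Finset.univ.biUnion fun i ↦ (e i).primeFactors).card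
    _ ≤ ((Finset.univ.biUnion fun i ↦ (e i).primeFactors \ S) ∪ S).card :=
      Finset.card_le_card fun r ↦ by grind
    _ ≤ Finset.card Finset.univ * k + S.card := (Finset.card_union_le ..).trans
      (Nat.add_le_add_right (Finset.card_biUnion_le_card_mul _ _ _ fun i _ ↦ hle i _ (he i)) _)
    _ = k * Fintype.card ι + S.card := by rw [Finset.card_univ, mul_comm]

variable [Nonempty ι]

theorem ncard_rhoSet_pi {A : ι → Finset ℕ} {k : ℕ} (hA : ∀ i, rhoSet (G i) = A i)
    (hS : ∀ i, S ⊆ A i) (hk : ∀ i, (A i \ S).card = k)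
    (hinter : Pairwise fun i j ↦ A i ∩ A j ⊆ S) :
    (rhoSet (∀ i, G i)).ncard = k * Fintype.card ι + S.card := by
  classical
  have hunion : rhoSet (∀ i, G i) = Finset.univ.biUnion A := by simp [rhoSet_pi, hA]
  rw [hunion, Set.ncard_coe_finset, card_biUnion_of_pairwise_inter_subset Finset.univ_nonempty
    (fun i _ ↦ hS i) (fun i _ ↦ hk i) (fun i _ j _ hij ↦ hinter hij), Finset.card_univ]

theorem sigmaVal_pi {k : ℕ} (hle : ∀ i, ∀ d ∈ charDegrees (G i), (d.primeFactors \ S).card ≤ k)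
    (hmax : ∀ i, ∃ d ∈ charDegrees (G i), S ⊆ d.primeFactors ∧ (d.primeFactors \ S).card = k)
    (hinter : Pairwise fun i j ↦ rhoSet (G i) ∩ rhoSet (G j) ⊆ S) :
    sigmaVal (∀ i, G i) = k * Fintype.card ι + S.card := by
  classical
  choose d hd hS hk using hmax
  have hinter' : Pairwise fun i j ↦ (d i).primeFactors ∩ (d j).primeFactors ⊆ S := by
    intro i j hij
    rw [← Finset.coe_subset, Finset.coe_inter]
    exact (Set.inter_subset_inter (primeFactors_subset_rhoSet (hd i))
      (primeFactors_subset_rhoSet (hd j))).trans (hinter hij)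
  refine IsGreatest.csSup_eq ⟨⟨∏ i, d i, ?_, ?_⟩, ?_⟩
  · rw [charDegrees_pi, Set.mem_fintype_prod]
    exact ⟨d, hd, rfl⟩
  · rw [primeFactors_finsetProd fun i _ ↦ ne_zero_of_mem_charDegrees (hd i),
      card_biUnion_of_pairwise_inter_subset Finset.univ_nonempty
        (fun i _ ↦ hS i) (fun i _ ↦ hk i) (fun i _ j _ hij ↦ hinter' hij), Finset.card_univ]
  · rintro _ ⟨m, hm, rfl⟩
    exact card_primeFactors_le_of_mem_charDegrees_pi hle hm

end Products

section Arithmetic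

theorem five_le_of_primeFactors_sdiff_nonempty {m : ℕ} (hm : (m.primeFactors \ {2, 3}).Nonempty) :
    5 ≤ m := by
  obtain ⟨r, hr⟩ := hm
  simp only [Finset.mem_sdiff, Nat.mem_primeFactors, Finset.mem_insert, Finset.mem_singleton,
    not_or] at hr
  obtain ⟨⟨hr, hrm, hm⟩, hr2, hr3⟩ := hr
  exact (hr.five_le_of_ne_two_of_ne_three hr2 hr3).trans (Nat.le_of_dvd (Nat.pos_of_ne_zero hm) hrm)

theorem coprime_six_of_three_lt {p : ℕ} (hp : p.Prime) (hp3 : 3 < p) : p.Coprime 6 :=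
  Nat.Coprime.mul_right ((Nat.coprime_primes hp Nat.prime_two).2 (by omega))
    ((Nat.coprime_primes hp Nat.prime_three).2 (by omega))

theorem six_dvd_sub_one_or_add_one {q : ℕ} (hq : q.Coprime 6) : 6 ∣ q - 1 ∨ 6 ∣ q + 1 := by
  have h2 : ¬2 ∣ q := fun h ↦ Nat.not_coprime_of_dvd_of_dvd one_lt_two h (by norm_num) hq
  have h3 : ¬3 ∣ q := fun h ↦ Nat.not_coprime_of_dvd_of_dvd (by norm_num) h (by norm_num) hq
  have h : q % 6 = 1 ∨ q % 6 = 5 := by omega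
  omega

theorem primeFactors_sq_sub_one {q : ℕ} (hq : 1 < q) :
    (q ^ 2 - 1).primeFactors = (q - 1).primeFactors ∪ (q + 1).primeFactors := by
  rw [← one_pow 2, Nat.sq_sub_sq, Nat.primeFactors_mul (by omega) (by omega), Finset.union_comm,
    one_pow]

theorem disjoint_primeFactors_sub_one_add_one {q : ℕ} :
    Disjoint ((q - 1).primeFactors \ {2, 3}) ((q + 1).primeFactors \ {2, 3}) := by
  refine Finset.disjoint_left.2 fun r hr₁ hr₂ ↦ ?_
  simp only [Finset.mem_sdiff, Nat.mem_primeFactors, Finset.mem_insert, Finset.mem_singleton,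
    not_or] at hr₁ hr₂
  have hdvd : r ∣ 2 := by
    have h := Nat.dvd_sub hr₂.1.2.1 hr₁.1.2.1
    rwa [show q + 1 - (q - 1) = 2 by omega] at h
  exact hr₁.2.1 ((Nat.prime_dvd_prime_iff_eq hr₁.1.1 Nat.prime_two).1 hdvd)

theorem notMem_primeFactors_sq_sub_one {p q : ℕ} (hp : p.Prime) (hpq : p ∣ q) :
    p ∉ (q ^ 2 - 1).primeFactors := fun h ↦ by
  obtain ⟨-, hdvd, hne⟩ := Nat.mem_primeFactors.1 h
  have hone := Nat.dvd_sub (hpq.trans (dvd_pow_self q two_ne_zero)) hdvd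
  rw [Nat.sub_sub_self (Nat.one_le_iff_ne_zero.2 fun h0 ↦ hne (by rw [h0]))] at hone
  exact hp.one_lt.ne' (Nat.dvd_one.1 hone)

theorem card_insert_primeFactors_sq_sub_one_sdiff {p q : ℕ} (hp : p.Prime) (hp3 : 3 < p)
    (hpq : p ∣ q) (hminus : ((q - 1).primeFactors \ {2, 3}).card = 1)
    (hplus : ((q + 1).primeFactors \ {2, 3}).card = 1) :
    (insert p (q ^ 2 - 1).primeFactors \ {2, 3}).card = 3 := by
  have hq : 1 < q := by
    have := five_le_of_primeFactors_sdiff_nonempty (Finset.card_pos.1 (hminus ▸ one_pos))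
    omega
  rw [Finset.insert_sdiff_of_notMem _ (by simp; omega), Finset.card_insert_of_notMem fun h ↦
      notMem_primeFactors_sq_sub_one hp hpq (Finset.sdiff_subset h),
    primeFactors_sq_sub_one hq, Finset.union_sdiff_distrib,
    Finset.card_union_of_disjoint disjoint_primeFactors_sub_one_add_one, hminus, hplus]

end Arithmetic

section PSLPrimes

variable {F : Type} [Field F] [Fintype F]

theorem ringChar_ne_two_of_coprime (h : (Fintype.card F).Coprime 6) : ringChar F ≠ 2 := fun h2 ↦
  Nat.not_coprime_of_dvd_of_dvd one_lt_two
    (Nat.dvd_of_mod_eq_zero (FiniteField.even_card_iff_char_two.1 h2)) (by norm_num) h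

theorem rhoSet_psl (hF : ringChar F ≠ 2) (hcard : 5 < Fintype.card F) :
    rhoSet PSL(2, F) =
      ↑((Fintype.card F).primeFactors ∪ (Fintype.card F ^ 2 - 1).primeFactors) := by
  rw [primeFactors_sq_sub_one (by omega), Finset.coe_union, Finset.coe_union]
  refine Set.Subset.antisymm ?_ (Set.union_subset
    (primeFactors_subset_rhoSet card_mem_charDegrees_psl)
    (Set.union_subset (primeFactors_subset_rhoSet (card_sub_one_mem_charDegrees_psl hF hcard))
      (primeFactors_subset_rhoSet (card_add_one_mem_charDegrees_psl hcard))))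
  rintro r ⟨hr, d, hd, hrd⟩
  obtain h | h | h := dvd_of_mem_charDegrees_psl hF hd
  · exact .inr (.inl (hr.mem_primeFactors (hrd.trans h) (by omega)))
  · exact .inl (hr.mem_primeFactors (hrd.trans h) (by omega))
  · exact .inr (.inr (hr.mem_primeFactors (hrd.trans h) (by omega)))

theorem card_primeFactors_sdiff_le_of_mem_charDegrees_psl (hF : ringChar F ≠ 2) {S : Finset ℕ}
    (hminus : ((Fintype.card F - 1).primeFactors \ S).card ≤ 1)
    (hplus : ((Fintype.card F + 1).primeFactors \ S).card ≤ 1) {d : ℕ}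
    (hd : d ∈ charDegrees PSL(2, F)) : (d.primeFactors \ S).card ≤ 1 := by
  have hmono {m : ℕ} (h : d ∣ m) (hm : m ≠ 0) :
      (d.primeFactors \ S).card ≤ (m.primeFactors \ S).card :=
    Finset.card_le_card (Finset.sdiff_subset_sdiff (Nat.primeFactors_mono h hm) subset_rfl)
  have hcard := Fintype.one_lt_card (α := F)
  obtain h | h | h := dvd_of_mem_charDegrees_psl hF hd
  · exact (hmono h (by omega)).trans hminus
  · exact (hmono h (by omega)).trans ((Finset.card_le_card Finset.sdiff_subset).trans
      (isPrimePow_iff_card_primeFactors_eq_one.1 (FiniteField.isPrimePow_card F)).le)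
  · exact (hmono h (by omega)).trans hplus

theorem exists_mem_charDegrees_psl_two_three_subset (hcop : (Fintype.card F).Coprime 6)
    (hcard : 5 < Fintype.card F) {S : Finset ℕ} {k : ℕ}
    (hminus : ((Fintype.card F - 1).primeFactors \ S).card = k)
    (hplus : ((Fintype.card F + 1).primeFactors \ S).card = k) :
    ∃ d ∈ charDegrees PSL(2, F), {2, 3} ⊆ d.primeFactors ∧ (d.primeFactors \ S).card = k := by
  have hsub {d : ℕ} (h6 : 6 ∣ d) (hd : d ≠ 0) : {2, 3} ⊆ d.primeFactors := by
    simp [Finset.insert_subset_iff, Nat.prime_two, Nat.prime_three, hd,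
      dvd_trans (by norm_num : 2 ∣ 6) h6, dvd_trans (by norm_num : 3 ∣ 6) h6]
  obtain h | h := six_dvd_sub_one_or_add_one hcop
  · exact ⟨_, card_sub_one_mem_charDegrees_psl (ringChar_ne_two_of_coprime hcop) hcard,
      hsub h (by omega), hminus⟩
  · exact ⟨_, card_add_one_mem_charDegrees_psl hcard, hsub h (by omega), hplus⟩

end PSLPrimes

theorem rho_sigma_of_product_PSL_general {ι : Type} [Fintype ι] [Nonempty ι] (p f : ι → ℕ)
    (hp : ∀ i, (p i).Prime) (hp3 : ∀ i, 3 < p i)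
    (F : ι → Type) [∀ i, Field (F i)] [∀ i, Fintype (F i)]
    (hF : ∀ i, Fintype.card (F i) = p i ^ f i)
    (hminus : ∀ i, ((p i ^ f i - 1).primeFactors \ {2, 3}).card = 1)
    (hplus : ∀ i, ((p i ^ f i + 1).primeFactors \ {2, 3}).card = 1)
    (hdisj : ∀ r s : ι, r ≠ s →
      insert (p r) ((p r ^ f r) ^ 2 - 1).primeFactors ∩
        insert (p s) ((p s ^ f s) ^ 2 - 1).primeFactors = {2, 3}) :
    (rhoSet (∀ i, PSL(2, F i))).ncard = 3 * Fintype.card ι + 2 ∧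
    sigmaVal (∀ i, PSL(2, F i)) = Fintype.card ι + 2 ∧
    (rhoSet (∀ i, PSL(2, F i))).ncard = 3 * sigmaVal (∀ i, PSL(2, F i)) - 4 := by
  let A (i : ι) : Finset ℕ := insert (p i) ((p i ^ f i) ^ 2 - 1).primeFactors
  have hcard (i) : 5 < Fintype.card (F i) := by
    have := five_le_of_primeFactors_sdiff_nonempty (Finset.card_pos.1 (hminus i ▸ one_pos))
    rw [hF]
    omega
  have hf (i) : f i ≠ 0 := fun h ↦ by simpa [hF, h] using hcard i
  have hcop (i) : (Fintype.card (F i)).Coprime 6 :=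
    hF i ▸ (coprime_six_of_three_lt (hp i) (hp3 i)).pow_left _
  have hchar (i) : ringChar (F i) ≠ 2 := ringChar_ne_two_of_coprime (hcop i)
  have hA (i) : rhoSet PSL(2, F i) = A i := by
    rw [rhoSet_psl (hchar i) (hcard i), hF, Nat.primeFactors_prime_pow (hf i) (hp i)]
    rfl
  have hmax (i) : ∃ d ∈ charDegrees PSL(2, F i),
      {2, 3} ⊆ d.primeFactors ∧ (d.primeFactors \ {2, 3}).card = 1 :=
    exists_mem_charDegrees_psl_two_three_subset (hcop i) (hcard i) (hF i ▸ hminus i)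
      (hF i ▸ hplus i)
  have h23 (i) : {2, 3} ⊆ A i := by
    obtain ⟨d, hd, hsub, -⟩ := hmax i
    exact hsub.trans (Finset.coe_subset.1 (hA i ▸ primeFactors_subset_rhoSet hd))
  have hinter : Pairwise fun i j ↦
      rhoSet PSL(2, F i) ∩ rhoSet PSL(2, F j) ⊆ (({2, 3} : Finset ℕ) : Set ℕ) := by
    intro i j hij
    rw [hA, hA, ← Finset.coe_inter, Finset.coe_subset]
    exact (hdisj i j hij).le
  have hρ := ncard_rhoSet_pi hA h23 (fun i ↦ card_insert_primeFactors_sq_sub_one_sdiff (hp i)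
    (hp3 i) (dvd_pow_self _ (hf i)) (hminus i) (hplus i)) fun i j hij ↦ (hdisj i j hij).le
  have hσ := sigmaVal_pi (G := fun i ↦ PSL(2, F i)) (fun i d ↦
    card_primeFactors_sdiff_le_of_mem_charDegrees_psl (hchar i) (hF i ▸ (hminus i).le)
      (hF i ▸ (hplus i).le)) hmax hinter
  rw [Finset.card_pair (by norm_num)] at hρ hσ
  omega

/-- For primes `p i > 5` and prime powers `q i = p i ^ f i` satisfying the
arithmetic conditions of Example 1.1, the group
`G = PSL(2,q₁) × ⋯ × PSL(2,qₙ)` satisfies `|ρ(G)| = 3n+2` and `σ(G) = n+2`;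
in particular `|ρ(G)| = 3σ(G) - 4`. -/
theorem rho_sigma_of_product_PSL (n : ℕ) (hn : 1 ≤ n) (p f : Fin n → ℕ)
    (hp : ∀ i, (p i).Prime) (hp5 : ∀ i, 5 < p i) (hf : ∀ i, 1 ≤ f i)
    (F : Fin n → Type) [∀ i, Field (F i)] [∀ i, Fintype (F i)]
    (hF : ∀ i, Fintype.card (F i) = p i ^ f i)
    (hminus : ∀ i, (((p i ^ f i - 1).primeFactors) \ {2, 3}).card = 1)
    (hplus : ∀ i, (((p i ^ f i + 1).primeFactors) \ {2, 3}).card = 1)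
    (hdisj : ∀ r s : Fin n, r ≠ s →
      (insert (p r) ((p r ^ f r) ^ 2 - 1).primeFactors) ∩
        (insert (p s) ((p s ^ f s) ^ 2 - 1).primeFactors) = ({2, 3} : Finset ℕ)) :
    (rhoSet (∀ i : Fin n, Matrix.SpecialLinearGroup (Fin 2) (F i) ⧸
        Subgroup.center (Matrix.SpecialLinearGroup (Fin 2) (F i)))).ncard = 3 * n + 2 ∧
    sigmaVal (∀ i : Fin n, Matrix.SpecialLinearGroup (Fin 2) (F i) ⧸
        Subgroup.center (Matrix.SpecialLinearGroup (Fin 2) (F i))) = n + 2 ∧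
    (rhoSet (∀ i : Fin n, Matrix.SpecialLinearGroup (Fin 2) (F i) ⧸
        Subgroup.center (Matrix.SpecialLinearGroup (Fin 2) (F i)))).ncard =
      3 * sigmaVal (∀ i : Fin n, Matrix.SpecialLinearGroup (Fin 2) (F i) ⧸
        Subgroup.center (Matrix.SpecialLinearGroup (Fin 2) (F i))) - 4 := by
  have : Nonempty (Fin n) := ⟨⟨0, hn⟩⟩
  simpa only [Fintype.card_fin] using rho_sigma_of_product_PSL_general p f hp
    (fun i ↦ (hp5 i).trans' (by norm_num)) F hF hminus hplus hdisj
end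

section
/- Let K be a finite group such that K/F(K) is nilpotent, where F(K) is the Fitting subgroup. Then there exists θ ∈ Irr(K) such that every prime dividing |K/F(K)| divides θ(1). -/
/-!
Write `F = F(K)`. The quotient `K ⧸ F` acts on the linear characters of `F`, and by Clifford's
theorem the length of the orbit of `χ` divides the degree of every irreducible representation
lying over `χ`. Since `K ⧸ F` is nilpotent its Sylow subgroups are normal, so `p` divides this
length as soon as the Sylow `p`-subgroup `Q` of `K ⧸ F` moves `χ`.

For a single prime `p` such a `χ` exists, of order prime to `p`: if `Q` fixed all characters of
order prime to `p`, then a Sylow `p`-subgroup `P` of `K` would satisfy `[P, F] ≤ P F'`, and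
Frattini's argument together with `F' ≤ Φ(F)` would make `P` normal in `K`, hence contained in `F`.

One `χ` serves all primes at once. If `Q` fixes `l` but `x ∈ Q` moves `ν`, of order prime to
`|Q|`, then `μ = (x • ν) / ν` has norm one over `Q` and is not fixed by it, so that `Q` moves
`l * μ`, while every element fixing `l * μ` fixes `l`.
-/

universe u v

open CategoryTheory MulAction

open scoped commutatorElement MonoidAlgebra

/-! ### The Fitting subgroup of a finite group is nilpotent -/

/-- The Fitting subgroup `F(K)`, the join of all nilpotent normal subgroups. -/
def fittingSubgroup (K : Type*) [Group K] : Subgroup K :=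
  sSup {N | N.Normal ∧ Group.IsNilpotent N}

/-- The `p`-core `O_p(K)`, the join of all normal `p`-subgroups. -/
def pCore (p : ℕ) (K : Type*) [Group K] : Subgroup K :=
  sSup {N | N.Normal ∧ IsPGroup p N}

section FittingSubgroup

variable {K : Type*} [Group K]

instance fittingSubgroup_normal : (fittingSubgroup K).Normal :=
  Subgroup.sSup_normal _ fun _ hN => hN.1

theorem le_fittingSubgroup (N : Subgroup K) [hN : N.Normal] [hnil : Group.IsNilpotent N] :
    N ≤ fittingSubgroup K :=
  le_sSup ⟨hN, hnil⟩

instance pCore_normal (p : ℕ) : (pCore p K).Normal :=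
  Subgroup.sSup_normal _ fun _ hN => hN.1

theorem isPGroup_pCore (p : ℕ) [Fact p.Prime] : IsPGroup p (pCore p K) :=
  Sylow.sSup_of_normal _ (fun _ hN => hN.2) fun _ hN => hN.1

theorem le_pCore {p : ℕ} {N : Subgroup K} [hN : N.Normal] (hp : IsPGroup p N) :
    N ≤ pCore p K :=
  le_sSup ⟨hN, hp⟩

theorem not_dvd_relIndex_pCore (N : Subgroup K) [N.Normal] [Finite N] [Group.IsNilpotent N]
    (p : ℕ) [Fact p.Prime] : ¬ p ∣ (pCore p K).relIndex N := by
  let P : Sylow p N := default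
  have : (P : Subgroup N).Characteristic := P.characteristic_of_normal inferInstance
  have hP : (P : Subgroup N) ≤ (pCore p K).subgroupOf N :=
    Subgroup.map_le_iff_le_comap.1 (le_pCore (P.isPGroup'.map N.subtype))
  exact fun hdvd => P.not_dvd_index (hdvd.trans (Subgroup.index_dvd_of_le hP))

theorem le_iSup_pCore [Finite K] (N : Subgroup K) [N.Normal] [Group.IsNilpotent N] :
    N ≤ ⨆ p : (Nat.card K).primeFactors, pCore p K := by
  rw [← Subgroup.relIndex_eq_one, Nat.eq_one_iff_not_exists_prime_dvd]
  intro p hp hdvd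
  have := Fact.mk hp
  have hpK : p ∈ (Nat.card K).primeFactors :=
    Nat.mem_primeFactors.2 ⟨hp, (hdvd.trans (Subgroup.relIndex_dvd_card _ _)).trans
      (Subgroup.card_subgroup_dvd_card N), Nat.card_pos.ne'⟩
  exact not_dvd_relIndex_pCore N p (hdvd.trans
    (Subgroup.relIndex_dvd_of_le_left N
      (le_iSup (fun q : (Nat.card K).primeFactors => pCore q K) ⟨p, hpK⟩)))

theorem commute_of_mem_pCore {p q : ℕ} [Fact p.Prime] [Fact q.Prime] (hpq : p ≠ q) {x y : K}
    (hx : x ∈ pCore p K) (hy : y ∈ pCore q K) : Commute x y :=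
  Subgroup.commute_of_normal_of_disjoint _ _ (pCore_normal p) (pCore_normal q)
    (IsPGroup.disjoint_of_ne p q hpq _ _ (isPGroup_pCore p) (isPGroup_pCore q)) x y hx hy

theorem isNilpotent_iSup_pCore [Finite K] :
    Group.IsNilpotent (⨆ p : (Nat.card K).primeFactors, pCore p K : Subgroup K) := by
  have prime (p : (Nat.card K).primeFactors) : Fact (p : ℕ).Prime :=
    ⟨Nat.prime_of_mem_primeFactors p.2⟩
  have nilpotent (p : (Nat.card K).primeFactors) : Group.IsNilpotent (pCore p K) :=
    (isPGroup_pCore (p : ℕ)).isNilpotent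
  have commute : Pairwise fun p q : (Nat.card K).primeFactors =>
      ∀ x y : K, x ∈ pCore p K → y ∈ pCore q K → Commute x y :=
    fun _ _ hpq _ _ => commute_of_mem_pCore (Subtype.coe_injective.ne hpq)
  rw [← Subgroup.noncommPiCoprod_range (hcomm := commute)]
  exact Group.nilpotent_of_surjective _ (Subgroup.noncommPiCoprod commute).rangeRestrict_surjective

instance isNilpotent_fittingSubgroup [Finite K] : Group.IsNilpotent (fittingSubgroup K) := by
  have hle : fittingSubgroup K ≤ ⨆ p : (Nat.card K).primeFactors, pCore p K :=
    sSup_le fun N ⟨_, _⟩ => le_iSup_pCore N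
  have := isNilpotent_iSup_pCore (K := K)
  exact Group.nilpotent_of_mulEquiv (Subgroup.subgroupOfEquivOfLe hle)

end FittingSubgroup

/-! ### Frattini's argument -/

section Frattini

variable {G : Type*} [Group G]

theorem commutator_le_of_isCoatom [Group.IsSolvable G] {M : Subgroup G} [M.Normal]
    (hM : IsCoatom M) : commutator G ≤ M := by
  have : Nontrivial (G ⧸ M) := QuotientGroup.nontrivial_iff.2 hM.1
  by_contra hnot
  have hsup : commutator G ⊔ M = ⊤ := hM.2 _ (right_lt_sup.2 hnot)
  have hmap : commutator (G ⧸ M) = (commutator G ⊔ M).map (QuotientGroup.mk' M) := by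
    rw [Subgroup.map_sup, QuotientGroup.map_mk'_self, sup_bot_eq, commutator_def, commutator_def,
      Subgroup.map_commutator, Subgroup.map_top_of_surjective _ (QuotientGroup.mk'_surjective M)]
  refine (Group.IsSolvable.commutator_lt_top_of_nontrivial (G ⧸ M)).ne ?_
  rw [hmap, hsup, Subgroup.map_top_of_surjective _ (QuotientGroup.mk'_surjective M)]

theorem commutator_le_frattini [Group.IsNilpotent G] : commutator G ≤ frattini G := by
  refine le_iInf₂ fun M hM => ?_
  have := Subgroup.NormalizerCondition.normal_of_coatom M
    Group.normalizerCondition_of_isNilpotent hM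
  exact commutator_le_of_isCoatom hM

theorem le_of_le_sup_commutator {N H : Subgroup G} [N.Normal] [Finite N] [Group.IsNilpotent N]
    (h : N ≤ H ⊔ ⁅N, N⁆) : N ≤ H := by
  have hsup : H.subgroupOf N ⊔ commutator N = ⊤ := by
    refine eq_top_iff.2 fun n _ => ?_
    obtain ⟨y, hy, z, hz, hyz⟩ := Subgroup.mem_sup_of_normal_right.1 (h n.2)
    rw [← Subgroup.map_subtype_commutator] at hz
    obtain ⟨z, hz, rfl⟩ := hz
    have hn : n * z⁻¹ ∈ H.subgroupOf N := by
      rwa [Subgroup.mem_subgroupOf, Subgroup.coe_mul, ← hyz, Subgroup.coe_inv,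
        Subgroup.coe_subtype, mul_inv_cancel_right]
    simpa using Subgroup.mul_mem_sup hn hz
  refine Subgroup.subgroupOf_eq_top.1 (frattini_nongenerating (top_le_iff.1 ?_))
  exact hsup.symm.le.trans (sup_le_sup_left commutator_le_frattini _)

theorem le_normalizer_sup {H L N : Subgroup G} [N.Normal] (h : ⁅H, L⁆ ≤ H ⊔ N) :
    L ≤ Subgroup.normalizer ((H ⊔ N : Subgroup G) : Set G) := by
  rw [Subgroup.le_normalizer_iff_commutator_le_left, Subgroup.commutator_le]
  intro g hg l hl
  obtain ⟨x, hx, n, hn, rfl⟩ := Subgroup.mem_sup_of_normal_right.1 hg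
  have hnl : ⁅n, l⁆ ∈ H ⊔ N :=
    (le_sup_right : N ≤ H ⊔ N)
      (Subgroup.commutator_le_left N L (Subgroup.commutator_mem_commutator hn hl))
  have hx' : x ∈ H ⊔ N := (le_sup_left : H ≤ H ⊔ N) hx
  rw [commutatorElement_mul_left_eq_conj_mul]
  exact mul_mem (mul_mem (mul_mem hx' hnl) (inv_mem hx'))
    (h (Subgroup.commutator_mem_commutator hx hl))

end Frattini

theorem sylow_normalizer_sup_eq_top {G : Type*} [Group G] [Finite G] {p : ℕ} [Fact p.Prime]
    (P : Sylow p G) (N : Subgroup G) [hPN : ((P : Subgroup G) ⊔ N).Normal] :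
    Subgroup.normalizer (P : Set G) ⊔ N = ⊤ := by
  have hP : (P : Subgroup G) ≤ Subgroup.normalizer (P : Set G) := Subgroup.le_normalizer
  have := P.normalizer_sup_eq_top' (N := (P : Subgroup G) ⊔ N) le_sup_left
  rwa [← sup_assoc, sup_eq_left.2 hP] at this

theorem sylow_normal_of_commutator_le {G : Type*} [Group G] [Finite G] {p : ℕ} [Fact p.Prime]
    (P : Sylow p G) (F : Subgroup G) [F.Normal] [Group.IsNilpotent F]
    [((P : Subgroup G) ⊔ F).Normal] (hcomm : ⁅(P : Subgroup G), F⁆ ≤ (P : Subgroup G) ⊔ ⁅F, F⁆) :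
    (P : Subgroup G).Normal := by
  have hsup : Subgroup.normalizer (P : Set G) ⊔ F = ⊤ := sylow_normalizer_sup_eq_top P F
  have hnormal : ((P : Subgroup G) ⊔ ⁅F, F⁆).Normal := by
    rw [← Subgroup.normalizer_eq_top_iff, ← top_le_iff, ← hsup]
    exact sup_le Subgroup.normalizer_le_normalizer_sup_normal (le_normalizer_sup hcomm)
  have hF : F ≤ Subgroup.normalizer (P : Set G) :=
    le_of_le_sup_commutator ((sylow_normalizer_sup_eq_top P ⁅F, F⁆).symm ▸ le_top)
  exact Subgroup.normalizer_eq_top_iff.1 ((sup_eq_left.2 hF).symm.trans hsup)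

theorem le_of_isPGroup_of_not_dvd_index {G : Type*} [Group G] {p : ℕ} [Fact p.Prime]
    {P T : Subgroup G} [hn : P.Normal] [T.FiniteIndex] (hP : IsPGroup p P) (hT : ¬ p ∣ T.index) :
    P ≤ T := by
  obtain ⟨x, hx⟩ := hP.nonempty_fixed_point_of_prime_not_dvd_card (G ⧸ T) hT
  obtain ⟨g, rfl⟩ := QuotientGroup.mk_surjective x
  intro y hy
  have hfix : ((g * y * g⁻¹ * g : G) : G ⧸ T) = g := hx ⟨g * y * g⁻¹, hn.conj_mem y hy g⟩
  rw [inv_mul_cancel_right, eq_comm, QuotientGroup.eq, inv_mul_cancel_left] at hfix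
  exact hfix

/-! ### Elements moved by several normal subgroups -/

section StabilizerAvoidance

variable {G V : Type*} [Group G] [CommGroup V] [MulDistribMulAction G V]

/-- The norm `v ↦ ∏ x ∈ P, x • v` of a finite group of operators `P`. -/
noncomputable def smulNorm (P : Subgroup G) [Finite P] : V →* V :=
  letI := Fintype.ofFinite P
  ∏ x : P, MulDistribMulAction.toMonoidHom V (x : G)

theorem smulNorm_apply (P : Subgroup G) [Fintype P] (v : V) :
    smulNorm P v = ∏ x : P, (x : G) • v := by
  rw [smulNorm, Subsingleton.elim (Fintype.ofFinite P) ‹_›]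
  exact MonoidHom.finsetProd_apply _ _ _

theorem smulNorm_smul_of_mem {P : Subgroup G} [Finite P] {x : G} (hx : x ∈ P) (v : V) :
    smulNorm P (x • v) = smulNorm P v := by
  have := Fintype.ofFinite P
  simp only [smulNorm_apply, smul_smul]
  exact Fintype.prod_equiv (Equiv.mulRight ⟨x, hx⟩) _ _ fun _ => rfl

theorem smulNorm_smul (P : Subgroup G) [hP : P.Normal] [Finite P] (g : G) (v : V) :
    smulNorm P (g • v) = g • smulNorm P v := by
  have := Fintype.ofFinite P
  simp only [smulNorm_apply, Finset.smul_prod', smul_smul]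
  exact Fintype.prod_equiv (MulAut.conjNormal g⁻¹).toEquiv _ _ fun y => by
    simp [mul_assoc]

theorem smulNorm_eq_pow_card {P : Subgroup G} [Finite P] {v : V} (hv : P ≤ stabilizer G v) :
    smulNorm P v = v ^ Nat.card P := by
  have := Fintype.ofFinite P
  rw [smulNorm_apply, Finset.prod_congr rfl fun x _ => hv x.2, Finset.prod_const,
    Finset.card_univ, Nat.card_eq_fintype_card]

theorem eq_one_of_smulNorm_eq_one {P : Subgroup G} [Finite P] {v : V} (hv : P ≤ stabilizer G v)
    (hnorm : smulNorm P v = 1) (hcop : (orderOf v).Coprime (Nat.card P)) : v = 1 := by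
  rw [smulNorm_eq_pow_card hv] at hnorm
  exact orderOf_eq_one_iff.1
    (Nat.eq_one_of_dvd_coprimes hcop dvd_rfl (orderOf_dvd_of_pow_eq_one hnorm))

theorem le_stabilizer_smul {P : Subgroup G} [hP : P.Normal] {v : V} (hv : P ≤ stabilizer G v)
    (g : G) : P ≤ stabilizer G (g • v) := by
  intro x hx
  have : g⁻¹ * x * g ∈ stabilizer G v := hv (by simpa using hP.conj_mem x hx g⁻¹)
  rw [mem_stabilizer_iff] at this ⊢
  rw [mul_smul, mul_smul, inv_smul_eq_iff] at this
  exact this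

theorem exists_stabilizer_le_and_not_le (P : Subgroup G) [P.Normal] [Finite P] {l ν : V}
    (hl : P ≤ stabilizer G l) (hν : ¬ P ≤ stabilizer G ν)
    (hcop : (orderOf ν).Coprime (Nat.card P)) :
    ∃ v : V, stabilizer G v ≤ stabilizer G l ∧ ¬ P ≤ stabilizer G v := by
  obtain ⟨x, hxP, hxν⟩ := SetLike.not_le_iff_exists.1 hν
  set μ : V := x • ν / ν with hμ
  have hμ1 : μ ≠ 1 := fun h => hxν (mem_stabilizer_iff.2 (div_eq_one.1 h))
  have hμnorm : smulNorm P μ = 1 := by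
    rw [hμ, map_div, smulNorm_smul_of_mem hxP, div_self']
  have hν' : ν ^ orderOf ν = 1 := pow_orderOf_eq_one ν
  have hμpow : μ ^ orderOf ν = 1 := by
    rw [hμ, div_pow, ← smul_pow', hν', smul_one, div_one]
  refine ⟨l * μ, fun y hy => ?_, fun hfix => ?_⟩
  · have hquot : y • l / l = μ / y • μ := by
      rw [mem_stabilizer_iff, smul_mul'] at hy
      rw [div_eq_div_iff_mul_eq_mul, hy, mul_comm]
    refine div_eq_one.1 (eq_one_of_smulNorm_eq_one (P := P) ?_ ?_ ?_)
    · intro z hz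
      rw [mem_stabilizer_iff, smul_div', le_stabilizer_smul hl y hz, hl hz]
    · rw [hquot, map_div, smulNorm_smul, hμnorm, smul_one, div_one]
    · refine hcop.coprime_dvd_left (orderOf_dvd_of_pow_eq_one ?_)
      rw [hquot, div_pow, ← smul_pow', hμpow, smul_one, div_one]
  · refine hμ1 (eq_one_of_smulNorm_eq_one (P := P) (fun y hy => ?_) hμnorm
      (hcop.coprime_dvd_left (orderOf_dvd_of_pow_eq_one hμpow)))
    have := hfix hy
    rw [mem_stabilizer_iff, smul_mul', hl hy] at this
    exact mul_left_cancel this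

theorem exists_forall_not_le_stabilizer {ι : Type*} [Finite ι] (P : ι → Subgroup G)
    [∀ i, (P i).Normal] [∀ i, Finite (P i)]
    (h : ∀ i, ∃ ν : V, (orderOf ν).Coprime (Nat.card (P i)) ∧ ¬ P i ≤ stabilizer G ν) :
    ∃ v : V, ∀ i, ¬ P i ≤ stabilizer G v := by
  classical
  have := Fintype.ofFinite ι
  suffices ∀ s : Finset ι, ∃ v : V, ∀ i ∈ s, ¬ P i ≤ stabilizer G v by
    simpa using this Finset.univ
  intro s
  induction s using Finset.induction_on with
  | empty => exact ⟨1, by simp⟩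
  | insert j s _ ih =>
    obtain ⟨l, hl⟩ := ih
    by_cases hj : P j ≤ stabilizer G l
    · obtain ⟨ν, hcop, hν⟩ := h j
      obtain ⟨v, hvl, hv⟩ := exists_stabilizer_le_and_not_le (P j) hj hν hcop
      exact ⟨v, (Finset.forall_mem_insert _ _ _).2 ⟨hv, fun i hi hle => hl i hi (hle.trans hvl)⟩⟩
    · exact ⟨l, (Finset.forall_mem_insert _ _ _).2 ⟨hj, hl⟩⟩

end StabilizerAvoidance

/-! ### Linear characters of the Fitting subgroup -/

/-- Conjugation of homomorphisms from a normal subgroup `N` to a commutative group, as an action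
of the quotient by `N`: inner automorphisms of `N` do not change such homomorphisms. -/
abbrev conjMonoidHomAction {G : Type*} [Group G] (N : Subgroup G) [N.Normal] (A : Type*)
    [CommGroup A] : MulDistribMulAction (G ⧸ N) (N →* A) :=
  let conj : G →* MulAut (N →* A) :=
    { toFun g := (MulAut.conjNormal g).monoidHomCongrLeft
      map_one' := by rw [map_one]; rfl
      map_mul' g h := by rw [map_mul]; rfl }
  MulDistribMulAction.compHom (N →* A) <| QuotientGroup.lift N conj fun n hn => by
    ext χ x
    have hconj : (MulAut.conjNormal n).symm x = (⟨n, hn⟩ : N)⁻¹ * x * ⟨n, hn⟩ := by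
      ext; simp [MulAut.conjNormal_symm_apply]
    simp [conj, hconj]

attribute [local instance] conjMonoidHomAction

theorem mk_smul_monoidHom_apply {G : Type*} [Group G] {N : Subgroup G} [N.Normal] {A : Type*}
    [CommGroup A] (g : G) (χ : N →* A) (n : N) :
    ((g : G ⧸ N) • χ) n = χ (MulAut.conjNormal g⁻¹ n) :=
  rfl

theorem exists_monoidHom_apply_ne_one {N : Type*} [Group N] [Finite N] (k : Type*) [CommRing k]
    [IsDomain k] [HasEnoughRootsOfUnity k (Monoid.exponent N)]
    {D : Subgroup N} (hD : commutator N ≤ D) {x : N} (hx : x ∉ D) :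
    ∃ χ : N →* kˣ, orderOf χ ∣ D.index ∧ χ x ≠ 1 := by
  have : D.Normal := Subgroup.Normal.of_commutator_le N hD
  have hcomm : IsMulCommutative (N ⧸ D) :=
    Subgroup.Normal.quotient_commutative_iff_commutator_le.2 hD
  let _ : CommGroup (N ⧸ D) := { mul_comm := hcomm.is_comm.comm }
  have : HasEnoughRootsOfUnity k (Monoid.exponent (N ⧸ D)) :=
    .of_dvd k (Group.exponent_quotient_dvd D)
  obtain ⟨ψ, hψ⟩ := CommGroup.exists_apply_ne_one_of_hasEnoughRootsOfUnity (N ⧸ D) k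
    (a := x) (by rwa [Ne, QuotientGroup.eq_one_iff])
  refine ⟨ψ.comp (QuotientGroup.mk' D), orderOf_dvd_of_pow_eq_one ?_, hψ⟩
  ext y
  rw [MonoidHom.pow_apply, MonoidHom.comp_apply, ← map_pow, D.index_eq_card, pow_card_eq_one',
    map_one, MonoidHom.one_apply]

theorem commutator_le_of_le_stabilizer {G : Type*} [Group G] (k : Type*) [CommRing k]
    [IsDomain k] {F P : Subgroup G} [F.Normal] [Finite F]
    [HasEnoughRootsOfUnity k (Monoid.exponent F)]
    (hfix : ∀ χ : F →* kˣ, orderOf χ ∣ P.relIndex F →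
      P.map (QuotientGroup.mk' F) ≤ stabilizer (G ⧸ F) χ) :
    ⁅P, F⁆ ≤ P ⊔ ⁅F, F⁆ := by
  rw [Subgroup.commutator_le]
  intro x hx f hf
  set c : F := MulAut.conjNormal x ⟨f, hf⟩ * ⟨f, hf⟩⁻¹ with hc
  by_contra hnot
  have hcomm : commutator F ≤ (P ⊔ ⁅F, F⁆).subgroupOf F :=
    Subgroup.map_le_iff_le_comap.1 ((Subgroup.map_subtype_commutator F).trans_le le_sup_right)
  obtain ⟨χ, hχ, hχc⟩ := exists_monoidHom_apply_ne_one k hcomm (x := c) hnot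
  have hx' : ((x⁻¹ : G) : G ⧸ F) • χ = χ := hfix χ
    (hχ.trans (Subgroup.relIndex_dvd_of_le_left F le_sup_left))
    (Subgroup.mem_map_of_mem (QuotientGroup.mk' F) (inv_mem hx))
  apply hχc
  rw [hc, map_mul, map_inv, mul_inv_eq_one]
  conv_rhs => rw [← hx', mk_smul_monoidHom_apply, inv_inv]

theorem exists_coprime_not_le_stabilizer {G : Type*} [Group G] [Finite G] (k : Type*) [CommRing k]
    [IsDomain k] [HasEnoughRootsOfUnity k (Monoid.exponent (fittingSubgroup G))]
    [Group.IsNilpotent (G ⧸ fittingSubgroup G)] {p : ℕ} [Fact p.Prime]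
    (hp : p ∣ Nat.card (G ⧸ fittingSubgroup G)) (Q : Sylow p (G ⧸ fittingSubgroup G)) :
    ∃ χ : fittingSubgroup G →* kˣ, (orderOf χ).Coprime (Nat.card Q) ∧
      ¬ (Q : Subgroup (G ⧸ fittingSubgroup G)) ≤ stabilizer (G ⧸ fittingSubgroup G) χ := by
  by_contra! hfix
  set F := fittingSubgroup G
  obtain ⟨P, hP⟩ := (default : Sylow p F).exists_comap_subtype_eq
  have hindex : ¬ p ∣ (P : Subgroup G).relIndex F := by
    rw [Subgroup.relIndex, Subgroup.subgroupOf, hP]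
    exact Sylow.not_dvd_index _
  have := Sylow.unique_of_normal Q inferInstance
  have hPQ : (P : Subgroup G).map (QuotientGroup.mk' F) = Q := by
    rw [← Subsingleton.elim (P.mapSurjective (QuotientGroup.mk'_surjective F)) Q]; rfl
  have hsup : ((P : Subgroup G) ⊔ F).Normal := by
    rw [sup_comm, ← QuotientGroup.comap_map_mk', hPQ]
    infer_instance
  have hPnormal : (P : Subgroup G).Normal := by
    refine sylow_normal_of_commutator_le P F (commutator_le_of_le_stabilizer k fun χ hχ => ?_)
    obtain ⟨n, hn⟩ := IsPGroup.iff_card.1 Q.isPGroup'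
    have hcop : p.Coprime (orderOf χ) :=
      ((Nat.Prime.coprime_iff_not_dvd Fact.out).2 hindex).coprime_dvd_right hχ
    exact hPQ.trans_le (hfix χ (hn ▸ (hcop.pow_left n).symm))
  have : Group.IsNilpotent P := P.isPGroup'.isNilpotent
  exact P.not_dvd_index (hp.trans (Subgroup.index_dvd_of_le (le_fittingSubgroup P.1)))

/-! ### Clifford's theorem for linear characters -/

section WeightSpaces

variable {k G W : Type*} [Field k] [Group G] [AddCommGroup W] [Module k W]

/-- The `χ`-weight space of a representation of `G`: the vectors on which the subgroup `H` acts
by scalars through the linear character `χ`. -/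
def weightSpace (ρ : Representation k G W) {H : Subgroup G} (χ : H →* kˣ) : Submodule k W :=
  ⨅ h : H, Module.End.eigenspace (ρ h) (χ h)

variable {ρ : Representation k G W}

theorem mem_weightSpace {H : Subgroup G} {χ : H →* kˣ} {w : W} :
    w ∈ weightSpace ρ χ ↔ ∀ h : H, ρ h w = (χ h : k) • w := by
  simp only [weightSpace, Submodule.mem_iInf, Module.End.mem_eigenspace_iff]

variable (ρ) in
theorem iSupIndep_weightSpace (H : Subgroup G) :
    iSupIndep fun χ : H →* kˣ => weightSpace ρ χ := by
  refine (iSupIndep_iff_finsetSum_eq_zero_imp_eq_zero _).2 fun s w hw hsum χ hχ => ?_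
  refine (Module.forall_dual_apply_eq_zero_iff k _).1 fun φ => ?_
  have hchar : LinearIndependent k fun χ : H →* kˣ => fun h => (χ h : k) :=
    (linearIndependent_monoidHom H k).comp (fun χ => (Units.coeHom k).comp χ) fun χ₁ χ₂ h =>
      MonoidHom.ext fun x => Units.ext (DFunLike.congr_fun h x)
  refine linearIndependent_iff'.1 hchar s (fun χ => φ (w χ)) (funext fun h => ?_) χ hχ
  calc (∑ χ ∈ s, φ (w χ) • fun h => (χ h : k)) h
      = φ (ρ h (∑ χ ∈ s, w χ)) := by
        simp only [Finset.sum_apply, Pi.smul_apply, map_sum]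
        exact Finset.sum_congr rfl fun χ hχ => by
          rw [mem_weightSpace.1 (hw χ hχ) h, map_smul, smul_eq_mul, smul_eq_mul, mul_comm]
    _ = 0 := by rw [hsum, map_zero, map_zero]

variable {N : Subgroup G} [N.Normal]

variable (ρ) in
theorem map_weightSpace_le (g : G) (χ : N →* kˣ) :
    (weightSpace ρ χ).map (ρ g) ≤ weightSpace ρ ((g : G ⧸ N) • χ) := by
  rintro _ ⟨w, hw, rfl⟩
  refine mem_weightSpace.2 fun n => ?_
  have hconj : (n : G) * g = g * (MulAut.conjNormal g⁻¹ n : N) := by simp [mul_assoc]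
  rw [← Module.End.mul_apply, ← map_mul, hconj, map_mul, Module.End.mul_apply,
    mem_weightSpace.1 hw, map_smul, mk_smul_monoidHom_apply]

variable (ρ) in
theorem map_weightSpace (g : G) (χ : N →* kˣ) :
    (weightSpace ρ χ).map (ρ g) = weightSpace ρ ((g : G ⧸ N) • χ) := by
  refine le_antisymm (map_weightSpace_le ρ g χ) fun w hw =>
    ⟨ρ g⁻¹ w, ?_, ρ.self_inv_apply g w⟩
  have := map_weightSpace_le ρ g⁻¹ _ (Submodule.mem_map_of_mem hw)
  rwa [QuotientGroup.mk_inv, inv_smul_smul] at this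

variable (ρ) in
theorem finrank_weightSpace_smul (x : G ⧸ N) (χ : N →* kˣ) :
    Module.finrank k (weightSpace ρ (x • χ)) = Module.finrank k (weightSpace ρ χ) := by
  obtain ⟨g, rfl⟩ := QuotientGroup.mk_surjective x
  rw [← map_weightSpace]
  exact (Submodule.equivMapOfInjective (ρ g) (ρ.apply_bijective g).1 _).finrank_eq.symm

theorem iSup_orbit_weightSpace_eq_top [ρ.IsIrreducible] {χ : N →* kˣ}
    (hχ : weightSpace ρ χ ≠ ⊥) :
    ⨆ ψ : orbit (G ⧸ N) χ, weightSpace ρ (ψ : N →* kˣ) = ⊤ := by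
  set S := ⨆ ψ : orbit (G ⧸ N) χ, weightSpace ρ (ψ : N →* kˣ) with hS
  have hle {ψ : N →* kˣ} (hψ : ψ ∈ orbit (G ⧸ N) χ) : weightSpace ρ ψ ≤ S :=
    le_iSup_of_le (ι := orbit (G ⧸ N) χ) ⟨ψ, hψ⟩ le_rfl
  have hmap (g : G) : S.map (ρ g) ≤ S := by
    rw [hS, Submodule.map_iSup]
    exact iSup_le fun ψ =>
      (map_weightSpace_le ρ g ψ.1).trans (hle (mem_orbit_of_mem_orbit (g : G ⧸ N) ψ.2))
  let U : Subrepresentation ρ := ⟨S, fun g _ hv => hmap g (Submodule.mem_map_of_mem hv)⟩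
  have hU : U ≠ ⊥ := fun h => hχ <| eq_bot_iff.2 <|
    (hle (mem_orbit_self χ)).trans_eq (congrArg Subrepresentation.toSubmodule h)
  exact congrArg Subrepresentation.toSubmodule ((eq_bot_or_eq_top U).resolve_left hU)

theorem index_stabilizer_dvd_finrank [Module.Finite k W] [ρ.IsIrreducible] {χ : N →* kˣ}
    (hχ : weightSpace ρ χ ≠ ⊥) :
    (stabilizer (G ⧸ N) χ).index ∣ Module.finrank k W := by
  classical
  let A (ψ : orbit (G ⧸ N) χ) : Submodule k W := weightSpace ρ (ψ : N →* kˣ)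
  have hindep : iSupIndep A := (iSupIndep_weightSpace ρ N).comp Subtype.coe_injective
  have hinternal : DirectSum.IsInternal A :=
    DirectSum.isInternal_submodule_of_iSupIndep_of_iSup_eq_top hindep
      (iSup_orbit_weightSpace_eq_top hχ)
  have hfinrank (ψ : orbit (G ⧸ N) χ) :
      Module.finrank k (A ψ) = Module.finrank k (weightSpace ρ χ) := by
    obtain ⟨_, x, rfl⟩ := ψ
    exact finrank_weightSpace_smul ρ x χ
  have hne (ψ : orbit (G ⧸ N) χ) : A ψ ≠ ⊥ := by
    rwa [Ne, ← Submodule.finrank_eq_zero, hfinrank ψ, Submodule.finrank_eq_zero]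
  have : Finite (orbit (G ⧸ N) χ) := WellFoundedGT.finite_of_iSupIndep hindep hne
  have := Fintype.ofFinite (orbit (G ⧸ N) χ)
  refine ⟨Module.finrank k (weightSpace ρ χ), ?_⟩
  calc Module.finrank k W = ∑ ψ, Module.finrank k (A ψ) := by
        rw [← (LinearEquiv.ofBijective (DirectSum.coeLinearMap A) hinternal).finrank_eq,
          Module.finrank_directSum]
    _ = (stabilizer (G ⧸ N) χ).index * Module.finrank k (weightSpace ρ χ) := by
        rw [Finset.sum_congr rfl fun ψ _ => hfinrank ψ, Finset.sum_const, smul_eq_mul,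
          Finset.card_univ, index_stabilizer, ← Nat.card_coe_set_eq, Nat.card_eq_fintype_card]

end WeightSpaces

/-! ### Irreducible representations over a linear character -/

section Existence

variable {k G : Type*} [Field k] [Group G]

/-- The element `∑ h, χ(h⁻¹) h` of the group algebra, on which `H` acts through `χ`. -/
noncomputable def weightElement {H : Subgroup G} [Fintype H] (χ : H →* kˣ) : k[G] :=
  ∑ h : H, MonoidAlgebra.single (h : G) (χ h⁻¹ : k)

theorem weightElement_ne_zero {H : Subgroup G} [Fintype H] (χ : H →* kˣ) :
    weightElement χ ≠ 0 := by
  classical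
  intro h
  have := congrArg (fun a : k[G] => a.coeff 1) h
  simp [weightElement, Finsupp.single_apply] at this

theorem single_mul_weightElement {H : Subgroup G} [Fintype H] (χ : H →* kˣ) (h : H) :
    MonoidAlgebra.single (h : G) 1 * weightElement χ = (χ h : k) • weightElement χ := by
  simp only [weightElement, Finset.mul_sum, Finset.smul_sum, MonoidAlgebra.single_mul_single,
    one_mul, MonoidAlgebra.smul_single]
  refine Fintype.sum_equiv (Equiv.mulLeft h) _ _ fun x => ?_
  simp [mul_comm]

section OfModule

variable (M : Type*) [AddCommGroup M] [Module k M] [Module k[G] M] [IsScalarTower k k[G] M]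

theorem ofModule'_apply (g : G) (x : M) :
    Representation.ofModule' (k := k) M g x = MonoidAlgebra.single g (1 : k) • x :=
  rfl

theorem isIrreducible_ofModule' [IsSimpleModule k[G] M] :
    Representation.IsIrreducible (Representation.ofModule' (k := k) (G := G) M) := by
  refine (Representation.irreducible_iff_isSimpleModule_asModule _).2 (IsSimpleModule.congr
    { (Representation.ofModule' (k := k) (G := G) M).asModuleEquiv with
      map_smul' r x := ?_ } : IsSimpleModule k[G] _)
  have : (Representation.ofModule' (k := k) (G := G) M).asAlgebraHom = Algebra.lsmul k k M :=
    (MonoidAlgebra.lift k _ G).apply_symm_apply _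
  exact (Representation.asModuleEquiv_map_smul _ r x).trans (this ▸ rfl)

end OfModule

theorem exists_isIrreducible_weightSpace_ne_bot {k G : Type u} [Field k] [Group G] [Finite G]
    {H : Subgroup G} (χ : H →* kˣ) :
    ∃ V : FDRep k G, Representation.IsIrreducible V.ρ ∧ weightSpace V.ρ χ ≠ ⊥ := by
  have := Fintype.ofFinite H
  obtain ⟨m, hm, hle⟩ := Ideal.exists_le_maximal (Ideal.torsionOf k[G] k[G] (weightElement χ))
    (mt (Ideal.torsionOf_eq_top_iff k[G] _).1 (weightElement_ne_zero χ))
  have : IsSimpleModule k[G] (k[G] ⧸ m) := isSimpleModule_iff_isCoatom.2 hm.out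
  have : Module.Finite k k[G] := Module.Finite.of_basis (MonoidAlgebra.basis G k)
  have : Module.Finite k (k[G] ⧸ m) := Module.Finite.quotient k m
  have hweight : (Submodule.Quotient.mk 1 : k[G] ⧸ m) ∈
      weightSpace (Representation.ofModule' (k := k) (G := G) (k[G] ⧸ m)) χ := by
    refine mem_weightSpace.2 fun h => ?_
    rw [ofModule'_apply, ← Submodule.Quotient.mk_smul, ← Submodule.Quotient.mk_smul,
      Submodule.Quotient.eq, smul_eq_mul, mul_one]
    refine hle ((Ideal.mem_torsionOf_iff _ _).2 ?_)
    rw [smul_eq_mul, sub_mul, single_mul_weightElement, smul_one_mul, sub_self]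
  exact ⟨FDRep.of (Representation.ofModule' (k[G] ⧸ m)), isIrreducible_ofModule' _,
    (Submodule.ne_bot_iff _).2 ⟨_, hweight,
      mt (Submodule.Quotient.mk_eq_zero m).1 (m.ne_top_iff_one.1 hm.ne_top)⟩⟩

end Existence

theorem simple_of_isIrreducible_s12 {k : Type u} {G : Type v} [Field k] [Monoid G] (V : FDRep k G)
    [Representation.IsIrreducible V.ρ] : Simple V := by
  let F := forget₂ (FDRep k G) (Rep.{u} k G) ⋙ Rep.toModuleMonoidAlgebra
  have : Simple (F.obj V) := (simple_iff_isSimpleModule' _).2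
    (inferInstanceAs (IsSimpleModule (MonoidAlgebra k G) (Representation.asModule V.ρ)))
  exact F.simple_of_simple_obj V

theorem exists_irreducible_degree_divisible_general {k K : Type u} [Field k] [Group K] [Finite K]
    [HasEnoughRootsOfUnity k (Monoid.exponent (fittingSubgroup K))]
    [Group.IsNilpotent (K ⧸ fittingSubgroup K)] :
    ∃ V : FDRep k K, Simple V ∧
      (Nat.card (K ⧸ fittingSubgroup K)).primeFactors ⊆ (Module.finrank k V).primeFactors := by
  set π := (Nat.card (K ⧸ fittingSubgroup K)).primeFactors
  have prime (p : π) : Fact (p : ℕ).Prime := ⟨Nat.prime_of_mem_primeFactors p.2⟩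
  let Q (p : π) : Sylow p (K ⧸ fittingSubgroup K) := default
  obtain ⟨χ, hχ⟩ := exists_forall_not_le_stabilizer (fun p => (Q p).1) fun p =>
    exists_coprime_not_le_stabilizer k (Nat.dvd_of_mem_primeFactors p.2) (Q p)
  obtain ⟨V, hV, hVχ⟩ := exists_isIrreducible_weightSpace_ne_bot χ
  have : Nontrivial V := (Submodule.nontrivial_iff k).1 ⟨_, _, hVχ⟩
  refine ⟨V, simple_of_isIrreducible_s12 V, fun p hp => ?_⟩
  have hindex : p ∣ (stabilizer (K ⧸ fittingSubgroup K) χ).index := by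
    by_contra hnot
    have := prime ⟨p, hp⟩
    exact hχ ⟨p, hp⟩ (le_of_isPGroup_of_not_dvd_index (Q ⟨p, hp⟩).isPGroup' hnot)
  exact Nat.mem_primeFactors.2 ⟨Nat.prime_of_mem_primeFactors hp,
    hindex.trans (index_stabilizer_dvd_finrank hVχ), Module.finrank_pos.ne'⟩

/-- Let `K` be a finite group whose quotient by its Fitting subgroup `F`
(the subgroup generated by all nilpotent normal subgroups, given here together
with its normality) is nilpotent. Then there is an irreducible character `θ` of
`K` (an irreducible complex representation) whose degree is divisible by every
prime dividing `|K/F(K)|`. -/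
theorem exists_irreducible_degree_divisible (K : Type) [Group K] [Finite K]
    (F : Subgroup K) [F.Normal]
    (hF : F = ⨆ (N : Subgroup K) (_ : N.Normal) (_ : Group.IsNilpotent N), N)
    (hnil : Group.IsNilpotent (K ⧸ F)) :
    ∃ V : FDRep ℂ K, CategoryTheory.Simple V ∧
      (Nat.card (K ⧸ F)).primeFactors ⊆ (Module.finrank ℂ V).primeFactors := by
  obtain rfl : F = fittingSubgroup K := by
    simp only [hF, fittingSubgroup, sSup_eq_iSup, Set.mem_ofPred_eq, iSup_and]
  exact exists_irreducible_degree_divisible_general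
end
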